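/- Let K be a semidualizing R-module and let c_1 and c_2 be two G_K-Gorenstein ideals of R. Assume M_1, M, M_2 are R-modules such that M_1 is linked to M by c_1 and M is linked to M_2 by c_2. Then: (i) G_K-dim_R(M_1) = G_K-dim_R(M_2); (ii) if these dimensions are finite, then M_1 satisfies the condition S̃_k if and only if M_2 satisfies the condition S̃_k. -/

import Mathlib

open CategoryTheory

noncomputable section

universe u

/-- The `i`-th Ext group `Ext^i_R(M,N)`, as a type (with its `R`-module structure). -/
abbrev extM (R : Type u) [CommRing R] (i : ℕ) (M N : Type u) [AddCommGroup M] [Module R M]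
    [AddCommGroup N] [Module R N] : Type u :=
  ((Ext R (ModuleCat.{u} R) i).obj (Opposite.op (ModuleCat.of R M))).obj (ModuleCat.of R N)

/-- The `i`-th Tor group `Tor^R_i(M,N)`, as a type. -/
abbrev torM (R : Type u) [CommRing R] (i : ℕ) (M N : Type u) [AddCommGroup M] [Module R M]
    [AddCommGroup N] [Module R N] : Type u :=
  ((Tor (ModuleCat.{u} R) i).obj (ModuleCat.of R M)).obj (ModuleCat.of R N)

/-- The `i`-th local cohomology `H^i_I(M)`, as a type. -/
abbrev locCoh (R : Type u) [CommRing R] (I : Ideal R) (i : ℕ) (M : Type u) [AddCommGroup M]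
    [Module R M] : Type u :=
  (localCohomology I i).obj (ModuleCat.of R M)

/-- A submodule `N ≤ M` is superfluous if `K ⊔ N = ⊤` implies `K = ⊤`. -/
def Submodule.IsSuperfluous {R M : Type u} [CommRing R] [AddCommGroup M] [Module R M]
    (N : Submodule R M) : Prop :=
  ∀ K : Submodule R M, K ⊔ N = ⊤ → K = ⊤

/-- A minimal projective resolution of `M` by finitely generated projective modules:
each `P i → Ω^i M` is a projective cover (i.e. has superfluous kernel). -/
structure MinRes (R : Type u) [CommRing R] (M : Type u) [AddCommGroup M] [Module R M] where
  P : ℕ → ModuleCat.{u} R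
  projective : ∀ i, Module.Projective R (P i)
  finite : ∀ i, Module.Finite R (P i)
  d : (i : ℕ) → (↥(P (i + 1)) →ₗ[R] ↥(P i))
  ε : ↥(P 0) →ₗ[R] M
  surj : Function.Surjective ε
  exact0 : LinearMap.range (d 0) = LinearMap.ker ε
  exact : ∀ i, LinearMap.range (d (i + 1)) = LinearMap.ker (d i)
  min_eps : (LinearMap.ker ε).IsSuperfluous
  min_d : ∀ i, (LinearMap.ker (d i)).IsSuperfluous

namespace MinRes

variable {R M : Type u} [CommRing R] [AddCommGroup M] [Module R M]

/-- `T k F` is the Auslander-Bridger transpose `𝒯_{k+1} M = Tr Ω^k M`, computed as the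
cokernel of `P_k* → P_{k+1}*`. -/
def T (F : MinRes R M) (k : ℕ) : Type u :=
  (Module.Dual R ↥(F.P (k + 1))) ⧸ LinearMap.range (F.d k).dualMap

instance (F : MinRes R M) (k : ℕ) : AddCommGroup (F.T k) :=
  inferInstanceAs (AddCommGroup ((Module.Dual R ↥(F.P (k + 1))) ⧸
    LinearMap.range (F.d k).dualMap))

instance (F : MinRes R M) (k : ℕ) : Module R (F.T k) :=
  inferInstanceAs (Module R ((Module.Dual R ↥(F.P (k + 1))) ⧸
    LinearMap.range (F.d k).dualMap))

/-- The transpose `Tr M = coker(P₀* → P₁*)` computed from a minimal projective presentation. -/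
abbrev Tr (F : MinRes R M) : Type u := F.T 0

/-- `λM = ΩTr M`, realized as the image of `P₀* → P₁*` for a minimal projective
presentation `P₁ → P₀ → M → 0`. -/
def lambdaMod (F : MinRes R M) : Type u :=
  ↥(LinearMap.range (F.d 0).dualMap)

instance (F : MinRes R M) : AddCommGroup F.lambdaMod :=
  inferInstanceAs (AddCommGroup ↥(LinearMap.range (F.d 0).dualMap))

instance (F : MinRes R M) : Module R F.lambdaMod :=
  inferInstanceAs (Module R ↥(LinearMap.range (F.d 0).dualMap))

end MinRes

/-- `M` is a horizontally linked `R`-module, i.e. `M ≅ λλM`. -/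
def IsHorizontallyLinked (R : Type u) [CommRing R] (M : Type u) [AddCommGroup M]
    [Module R M] : Prop :=
  ∃ (F : MinRes R M) (G : MinRes R F.lambdaMod), Nonempty (G.lambdaMod ≃ₗ[R] M)

/-- `M` and `N` are horizontally linked to each other: `M ≅ λN` and `N ≅ λM`. -/
def MutuallyLinked (A : Type u) [CommRing A] (M N : Type u) [AddCommGroup M] [Module A M]
    [AddCommGroup N] [Module A N] : Prop :=
  ∃ (F : MinRes A M) (G : MinRes A N),
    Nonempty (F.lambdaMod ≃ₗ[A] N) ∧ Nonempty (G.lambdaMod ≃ₗ[A] M)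

/-- `M` is linked to `N` by the ideal `c`: `c` annihilates both modules and they are
horizontally linked to each other as `R ⧸ c`-modules. -/
def LinkedBy (R : Type u) [CommRing R] (c : Ideal R) (M N : Type u) [AddCommGroup M]
    [Module R M] [AddCommGroup N] [Module R N] : Prop :=
  ∃ (hM : Module.IsTorsionBySet R M c) (hN : Module.IsTorsionBySet R N c),
    letI := hM.module
    letI := hN.module
    MutuallyLinked (R ⧸ c) M N

/-- A stable module: no nonzero projective direct summand. -/
def IsStableModule (R : Type u) [CommRing R] (M : Type u) [AddCommGroup M] [Module R M] : Prop :=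
  ∀ N : Submodule R M, Module.Projective R ↥N → (∃ N' : Submodule R M, IsCompl N N') → N = ⊥

/-- `M` has G-dimension zero: `M` is finitely generated and reflexive,
and `Ext^i(M,R) = 0 = Ext^i(M*,R)` for all `i > 0`. -/
def IsGDimZero (R : Type u) [CommRing R] (M : Type u) [AddCommGroup M] [Module R M] : Prop :=
  Module.Finite R M ∧ Function.Bijective (Module.Dual.eval R M) ∧
    (∀ i : ℕ, 0 < i → Subsingleton (extM R i M R)) ∧
    (∀ i : ℕ, 0 < i → Subsingleton (extM R i (Module.Dual R M) R))

/-- `M` admits a resolution of length `≤ n` by modules of G-dimension zero. -/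
def GDimLE (R : Type u) [CommRing R] : ℕ → ModuleCat.{u} R → Prop
  | 0, M => IsGDimZero R ↥M
  | n + 1, M =>
    ∃ (G : ModuleCat.{u} R) (f : ↥G →ₗ[R] ↥M), IsGDimZero R ↥G ∧ Function.Surjective f ∧
      GDimLE R n (ModuleCat.of R ↥(LinearMap.ker f))

/-- The G-dimension of `M`: the minimal length of a resolution of `M` by modules of
G-dimension zero (`∞` if there is none). -/
def GDim (R : Type u) [CommRing R] (M : Type u) [AddCommGroup M] [Module R M] : ℕ∞ :=
  sInf {n : ℕ∞ | ∃ k : ℕ, n = k ∧ GDimLE R k (ModuleCat.of R M)}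

/-- The reduced grade of `M`: `rgr M = inf{ i > 0 | Ext^i(M,R) ≠ 0 }`. -/
def rgr (R : Type u) [CommRing R] (M : Type u) [AddCommGroup M] [Module R M] : ℕ∞ :=
  sInf {n : ℕ∞ | ∃ k : ℕ, n = k ∧ 0 < k ∧ ¬ Subsingleton (extM R k M R)}

/-- The grade of `M`: `gr M = inf{ i ≥ 0 | Ext^i(M,R) ≠ 0 }`. -/
def egrade (R : Type u) [CommRing R] (M : Type u) [AddCommGroup M] [Module R M] : ℕ∞ :=
  sInf {n : ℕ∞ | ∃ k : ℕ, n = k ∧ ¬ Subsingleton (extM R k M R)}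

/-- `depth_I(M) = inf{ i | Ext^i(R/I, M) ≠ 0 }`; for `I` the maximal ideal of a
local ring this is the depth of `M`. -/
def edepth (R : Type u) [CommRing R] (I : Ideal R) (M : Type u) [AddCommGroup M]
    [Module R M] : ℕ∞ :=
  sInf {n : ℕ∞ | ∃ k : ℕ, n = k ∧ ¬ Subsingleton (extM R k (R ⧸ I) M)}

/-- The depth of the local ring `R`. -/
def rdepth (R : Type u) [CommRing R] [IsLocalRing R] : ℕ∞ :=
  edepth R (IsLocalRing.maximalIdeal R) R

/-- `depth_{R_p}(M_p)`. -/
def locDepth (R : Type u) [CommRing R] (p : Ideal R) [p.IsPrime] (M : Type u) [AddCommGroup M]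
    [Module R M] : ℕ∞ :=
  edepth (Localization.AtPrime p) (IsLocalRing.maximalIdeal (Localization.AtPrime p))
    (LocalizedModule p.primeCompl M)

/-- `depth R_p`. -/
def locRingDepth (R : Type u) [CommRing R] (p : Ideal R) [p.IsPrime] : ℕ∞ :=
  rdepth (Localization.AtPrime p)

/-- `Gdim_{R_p}(M_p)`. -/
def locGDim (R : Type u) [CommRing R] (p : Ideal R) [p.IsPrime] (M : Type u) [AddCommGroup M]
    [Module R M] : ℕ∞ :=
  GDim (Localization.AtPrime p) (LocalizedModule p.primeCompl M)

/-- `rgr_{R_p}(M_p)`. -/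
def locRgr (R : Type u) [CommRing R] (p : Ideal R) [p.IsPrime] (M : Type u) [AddCommGroup M]
    [Module R M] : ℕ∞ :=
  rgr (Localization.AtPrime p) (LocalizedModule p.primeCompl M)

/-- `dim_{R_p}(M_p)`, the Krull dimension of the support of `M_p` over `R_p`. -/
def locDim (R : Type u) [CommRing R] (p : Ideal R) [p.IsPrime] (M : Type u) [AddCommGroup M]
    [Module R M] : WithBot ℕ∞ :=
  ringKrullDim ((Localization.AtPrime p) ⧸
    Module.annihilator (Localization.AtPrime p) (LocalizedModule p.primeCompl M))

/-- `M` satisfies the condition `S̃_k`: `depth_{R_p}(M_p) ≥ min{k, depth R_p}` for all primes. -/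
def Stilde (R : Type u) [CommRing R] (k : ℕ) (M : Type u) [AddCommGroup M] [Module R M] : Prop :=
  ∀ (p : Ideal R) (_ : p.IsPrime), min (k : ℕ∞) (locRingDepth R p) ≤ locDepth R p M

/-- `M` satisfies Serre's condition `(S_k)`:
`depth_{R_p}(M_p) ≥ min{k, dim_{R_p}(M_p)}` for all primes. -/
def SerreS (R : Type u) [CommRing R] (k : ℕ) (M : Type u) [AddCommGroup M] [Module R M] : Prop :=
  ∀ (p : Ideal R) (_ : p.IsPrime),
    min (k : WithBot ℕ∞) (locDim R p M) ≤ (locDepth R p M : WithBot ℕ∞)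

/-- `M` is a `k`-th syzygy module. -/
def IsKthSyzygy (R : Type u) [CommRing R] : ℕ → ModuleCat.{u} R → Prop
  | 0, _ => True
  | k + 1, M =>
    ∃ (P : ModuleCat.{u} R) (f : ↥M →ₗ[R] ↥P), Module.Projective R ↥P ∧ Module.Finite R ↥P ∧
      Function.Injective f ∧ IsKthSyzygy R k (ModuleCat.of R (↥P ⧸ LinearMap.range f))

/-- The `I`-torsion submodule `Γ_I(M) = { x | I^n x = 0 for some n }`. -/
def gammaTorsion (R : Type u) [CommRing R] (I : Ideal R) (M : Type u) [AddCommGroup M]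
    [Module R M] : Submodule R M where
  carrier := {x | ∃ n : ℕ, ∀ a ∈ I ^ n, a • x = 0}
  zero_mem' := ⟨0, fun a _ => smul_zero a⟩
  add_mem' := by
    rintro x y ⟨n, hn⟩ ⟨m, hm⟩
    exact ⟨n + m, fun a ha => by
      rw [smul_add, hn a (Ideal.pow_le_pow_right (Nat.le_add_right n m) ha),
        hm a (Ideal.pow_le_pow_right (Nat.le_add_left m n) ha), add_zero]⟩
  smul_mem' := by
    rintro c x ⟨n, hn⟩
    exact ⟨n, fun a ha => by rw [smul_comm, hn a ha, smul_zero]⟩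

/-- `N` has finite flat dimension (characterized by uniform vanishing of `Tor`). -/
def HasFiniteFlatDim (R : Type u) [CommRing R] (N : Type u) [AddCommGroup N] [Module R N] : Prop :=
  ∃ n : ℕ, ∀ i : ℕ, n < i → ∀ (M : ModuleCat.{u} R), Subsingleton (torM R i ↥M N)

/-- `N` has finite injective dimension (characterized by uniform vanishing of `Ext`). -/
def HasFiniteInjDim (R : Type u) [CommRing R] (N : Type u) [AddCommGroup N] [Module R N] : Prop :=
  ∃ n : ℕ, ∀ i : ℕ, n < i → ∀ (M : ModuleCat.{u} R), Subsingleton (extM R i ↥M N)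

/-- `K` is a semidualizing `R`-module. -/
def IsSemidualizing (R : Type u) [CommRing R] (K : Type u) [AddCommGroup K] [Module R K] : Prop :=
  Module.Finite R K ∧ Function.Bijective (LinearMap.lsmul R K) ∧
    ∀ i : ℕ, 0 < i → Subsingleton (extM R i K K)

/-- The biduality map `M → Hom(Hom(M,K),K)`. -/
def evalK (R : Type u) [CommRing R] (K M : Type u) [AddCommGroup K] [Module R K]
    [AddCommGroup M] [Module R M] : M →ₗ[R] ((M →ₗ[R] K) →ₗ[R] K) :=
  LinearMap.applyₗ

/-- `M` has `G_K`-dimension zero. -/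
def IsGKDimZero (R : Type u) [CommRing R] (K M : Type u) [AddCommGroup K] [Module R K]
    [AddCommGroup M] [Module R M] : Prop :=
  Module.Finite R M ∧ Function.Bijective (evalK R K M) ∧
    (∀ i : ℕ, 0 < i → Subsingleton (extM R i M K)) ∧
    (∀ i : ℕ, 0 < i → Subsingleton (extM R i (M →ₗ[R] K) K))

/-- `M` admits a resolution of length `≤ n` by modules of `G_K`-dimension zero. -/
def GKDimLE (R : Type u) [CommRing R] (K : Type u) [AddCommGroup K] [Module R K] :
    ℕ → ModuleCat.{u} R → Prop
  | 0, M => IsGKDimZero R K ↥M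
  | n + 1, M =>
    ∃ (G : ModuleCat.{u} R) (f : ↥G →ₗ[R] ↥M), IsGKDimZero R K ↥G ∧ Function.Surjective f ∧
      GKDimLE R K n (ModuleCat.of R ↥(LinearMap.ker f))

/-- The `G_K`-dimension of `M`. -/
def GKDim (R : Type u) [CommRing R] (K M : Type u) [AddCommGroup K] [Module R K]
    [AddCommGroup M] [Module R M] : ℕ∞ :=
  sInf {n : ℕ∞ | ∃ k : ℕ, n = k ∧ GKDimLE R K k (ModuleCat.of R M)}

/-- The grade of a module, `gr_R(M) = grade(Ann_R(M), R) = inf{i | Ext^i(R/Ann M, R) ≠ 0}`. -/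
def grAnn (R : Type u) [CommRing R] (M : Type u) [AddCommGroup M] [Module R M] : ℕ∞ :=
  egrade R (R ⧸ Module.annihilator R M)

/-- The grade of an ideal, `grade(I) = inf{i | Ext^i(R/I, R) ≠ 0}`. -/
def gradeI (R : Type u) [CommRing R] (I : Ideal R) : ℕ∞ :=
  egrade R (R ⧸ I)

/-- The ideal `I` is `G_K`-Gorenstein: `R/I` is `G_K`-perfect and `Ext^{gr I}(R/I, K)` is
cyclic. -/
def IsGKGorensteinIdeal (R : Type u) [CommRing R] (K : Type u) [AddCommGroup K] [Module R K]
    (I : Ideal R) : Prop :=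
  ∃ n : ℕ, grAnn R (R ⧸ I) = (n : ℕ∞) ∧ GKDim R K (R ⧸ I) = (n : ℕ∞) ∧
    ∃ x : extM R n (R ⧸ I) K, Submodule.span R {x} = ⊤

end

universe u

/-- zero criterion for `extMk` in degree zero -/
lemma lk_extMk_zero_iff {A : Type u} [CommRing A] {X Y : ModuleCat.{u} A}
    (P : ProjectiveResolution X) (f : P.complex.X 0 ⟶ Y) (m : ℕ) (hm : 0 + 1 = m)
    (hf : P.complex.d m 0 ≫ f = 0) :
    P.extMk f m hm hf = 0 ↔ f = 0 := by
  constructor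
  · intro h
    have h0 : P.cochainComplex.d (-((0:ℕ):ℤ)) 1 = 0 := by
      have : Limits.IsZero (P.cochainComplex.X 1) :=
        P.cochainComplex.isZero_of_isStrictlyLE 0 1
      exact this.eq_of_tgt _ _
    simp only [← P.extEquivCohomologyClass.apply_eq_iff_eq,
      ProjectiveResolution.extEquivCohomologyClass_extMk,
      ProjectiveResolution.extEquivCohomologyClass_zero,
      CochainComplex.HomComplex.CohomologyClass.mk_eq_zero_iff] at h
    rw [CochainComplex.HomComplex.Cocycle.toSingleMk_mem_coboundaries_iff _ _ _ _ _ 1 (by simp)] at h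
    obtain ⟨g, hg⟩ := h
    rw [h0] at hg
    simp only [Limits.zero_comp] at hg
    rw [← cancel_epi (P.cochainComplexXIso (-((0:ℕ):ℤ)) 0 rfl).hom, ← hg]
    simp
  · rintro rfl
    simp

lemma lk_homologyEquiv (A : Type u) [CommRing A] (S : ShortComplex (ModuleCat.{u} A))
    (H W : Type u) [AddCommGroup H] [Module A H] [AddCommGroup W] [Module A W]
    (e : S.X₂ ≃ₗ[A] H) (Z : Submodule A H) (ψ : Z →ₗ[A] W) (hs : Function.Surjective ψ)
    (h1 : ∀ x, S.g.hom x = 0 ↔ e x ∈ Z)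
    (h2 : ∀ x (h : e x ∈ Z), ψ ⟨e x, h⟩ = 0 ↔ ∃ y, S.f.hom y = x) :
    Nonempty (S.homology ≃ₗ[A] W) := by
  have e2 := S.moduleCatHomologyIso.toLinearEquiv
  let φ : LinearMap.ker S.g.hom →ₗ[A] W :=
    ψ ∘ₗ ((e.toLinearMap ∘ₗ (LinearMap.ker S.g.hom).subtype).codRestrict Z
      (fun x => (h1 _).1 x.2))
  have hφ : ∀ x, φ x = ψ ⟨e x.1, (h1 _).1 x.2⟩ := fun x => rfl
  have hsφ : Function.Surjective φ := by
    intro w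
    obtain ⟨⟨z, hz⟩, rfl⟩ := hs w
    refine ⟨⟨e.symm z, (h1 _).2 (by simpa using hz)⟩, ?_⟩
    rw [hφ]
    congr 1
    ext
    simp
  have hk : LinearMap.ker φ = LinearMap.range S.moduleCatToCycles := by
    ext x
    rw [LinearMap.mem_ker, hφ, h2, LinearMap.mem_range]
    constructor
    · rintro ⟨y, hy⟩
      exact ⟨y, Subtype.ext hy⟩
    · rintro ⟨y, hy⟩
      exact ⟨y, congrArg Subtype.val hy⟩
  exact ⟨e2 ≪≫ₗ (Submodule.quotEquivOfEq _ _ hk.symm) ≪≫ₗ φ.quotKerEquivOfSurjective hsφ⟩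

/-- the cocycles -/
def lkZ (A : Type u) [CommRing A] {X : ModuleCat.{u} A} (P : ProjectiveResolution X)
    (Y : ModuleCat.{u} A) (n : ℕ) : Submodule A (P.complex.X n ⟶ Y) where
  carrier := {f | P.complex.d (n+1) n ≫ f = 0}
  zero_mem' := by simp
  add_mem' := by
    intro f g hf hg
    simp only [Set.mem_ofPred_eq] at *
    simp [hf, hg]
  smul_mem' := by
    intro r f hf
    simp only [Set.mem_ofPred_eq] at *
    simp [hf]

lemma lkZ_mem (A : Type u) [CommRing A] {X : ModuleCat.{u} A} (P : ProjectiveResolution X)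
    (Y : ModuleCat.{u} A) (n : ℕ) (f : P.complex.X n ⟶ Y) (hf : f ∈ lkZ A P Y n) :
    P.complex.d (n+1) n ≫ f = 0 := hf

/-- cocycles to Ext -/
noncomputable def lkPsi (A : Type u) [CommRing A] {X : ModuleCat.{u} A} (P : ProjectiveResolution X)
    (Y : ModuleCat.{u} A) (n : ℕ) : lkZ A P Y n →ₗ[A] Abelian.Ext X Y n where
  toFun f := P.extMk f.1 (n+1) rfl (lkZ_mem A P Y n f.1 f.2)
  map_add' f g := by
    rw [ProjectiveResolution.add_extMk]; rfl
  map_smul' r f := by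
    rw [RingHom.id_apply, Abelian.Ext.smul_eq_comp_mk₀, ProjectiveResolution.extMk_comp_mk₀]
    congr 1

lemma lk_extEquiv (A : Type u) [CommRing A] (X Y : ModuleCat.{u} A) (n : ℕ) :
    Nonempty (((Ext A (ModuleCat.{u} A) n).obj (Opposite.op X)).obj Y ≃ₗ[A]
      Abelian.Ext X Y n) := by
  let P := ProjectiveResolution.of X
  let C := P.complex.linearYonedaObj A Y
  have e1 := (P.isoExt (R := A) n Y).toLinearEquiv
  suffices h : Nonempty (C.homology n ≃ₗ[A] Abelian.Ext X Y n) from ⟨e1 ≪≫ₗ h.some⟩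
  have hC : ∀ i j (f : P.complex.X i ⟶ Y), (C.d i j).hom f = P.complex.d j i ≫ f := fun i j f => rfl
  have hnx : (ComplexShape.up ℕ).next n = n+1 := by simp
  refine lk_homologyEquiv A (C.sc n) (P.complex.X n ⟶ Y) _ (LinearEquiv.refl A _) (lkZ A P Y n)
    (lkPsi A P Y n) ?_ ?_ ?_
  · intro w
    obtain ⟨f, hf, rfl⟩ := P.extMk_surjective w (n+1) rfl
    exact ⟨⟨f, hf⟩, rfl⟩
  · intro f
    change (C.d n ((ComplexShape.up ℕ).next n)).hom f = 0 ↔ P.complex.d (n+1) n ≫ f = 0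
    rw [hnx]
    rfl
  · intro f hf
    revert f
    intro (f : P.complex.X n ⟶ Y) (hf : f ∈ lkZ A P Y n)
    rcases n with _ | n
    · have h0 : (C.d ((ComplexShape.up ℕ).prev 0) 0) = 0 := C.shape _ _ (by simp)
      refine (lk_extMk_zero_iff P f _ rfl hf).trans ?_
      change _ ↔ ∃ y, (C.d ((ComplexShape.up ℕ).prev 0) 0).hom y = f
      rw [h0]
      constructor
      · rintro rfl
        exact ⟨0, rfl⟩
      · rintro ⟨y, rfl⟩
        rfl
    · refine (P.extMk_eq_zero_iff f _ rfl hf n rfl).trans ?_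
      change _ ↔ ∃ y, (C.d ((ComplexShape.up ℕ).prev (n+1)) (n+1)).hom y = f
      have : (ComplexShape.up ℕ).prev (n+1) = n := by simp
      rw [this]
      rfl

section LK2

/-- Ext of unbundled modules -/
abbrev EX (A : Type u) [CommRing A] (i : ℕ) (M N : Type u) [AddCommGroup M] [Module A M]
    [AddCommGroup N] [Module A N] : Type u :=
  Abelian.Ext (ModuleCat.of A M) (ModuleCat.of A N) i

variable {A : Type u} [CommRing A] {M M' M'' N N' N'' : Type u}
  [AddCommGroup M] [Module A M] [AddCommGroup M'] [Module A M'] [AddCommGroup M''] [Module A M'']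
  [AddCommGroup N] [Module A N] [AddCommGroup N'] [Module A N'] [AddCommGroup N''] [Module A N'']

lemma extM_equiv (i : ℕ) (M N : Type u) [AddCommGroup M] [Module A M]
    [AddCommGroup N] [Module A N] : Nonempty (extM A i M N ≃ₗ[A] EX A i M N) :=
  lk_extEquiv A _ _ i

lemma extM_subsingleton (i : ℕ) (M N : Type u) [AddCommGroup M] [Module A M]
    [AddCommGroup N] [Module A N] : Subsingleton (extM A i M N) ↔ Subsingleton (EX A i M N) :=
  (extM_equiv i M N).some.toEquiv.subsingleton_congr

/-- contravariant functoriality -/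
noncomputable def exPre (i : ℕ) (N : Type u) [AddCommGroup N] [Module A N] (f : M →ₗ[A] M') :
    EX A i M' N →ₗ[A] EX A i M N :=
  Abelian.Ext.precompOfLinear (Abelian.Ext.mk₀ (ModuleCat.ofHom f)) A (ModuleCat.of A N) (zero_add i)

/-- covariant functoriality -/
noncomputable def exPost (i : ℕ) (M : Type u) [AddCommGroup M] [Module A M] (f : N →ₗ[A] N') :
    EX A i M N →ₗ[A] EX A i M N' :=
  Abelian.Ext.postcompOfLinear (Abelian.Ext.mk₀ (ModuleCat.ofHom f)) A (ModuleCat.of A M) (add_zero i)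

lemma exPre_apply (i : ℕ) (f : M →ₗ[A] M') (x : EX A i M' N) :
    exPre i N f x = (Abelian.Ext.mk₀ (ModuleCat.ofHom f)).comp x (zero_add i) := rfl

lemma exPost_apply (i : ℕ) (f : N →ₗ[A] N') (x : EX A i M N) :
    exPost i M f x = x.comp (Abelian.Ext.mk₀ (ModuleCat.ofHom f)) (add_zero i) := rfl

lemma exPre_comp (i : ℕ) (f : M →ₗ[A] M') (g : M' →ₗ[A] M'') (x : EX A i M'' N) :
    exPre i N (g ∘ₗ f) x = exPre i N f (exPre i N g x) := by
  rw [exPre_apply, exPre_apply, exPre_apply, ModuleCat.ofHom_comp,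
    Abelian.Ext.mk₀_comp_mk₀_assoc]

lemma exPost_comp (i : ℕ) (f : N →ₗ[A] N') (g : N' →ₗ[A] N'') (x : EX A i M N) :
    exPost i M (g ∘ₗ f) x = exPost i M g (exPost i M f x) := by
  simp [exPost_apply, ModuleCat.ofHom_comp, ← Abelian.Ext.mk₀_comp_mk₀]

lemma exPre_id (i : ℕ) (x : EX A i M N) : exPre i N LinearMap.id x = x := by
  simp [exPre_apply]

lemma exPost_id (i : ℕ) (x : EX A i M N) : exPost i M LinearMap.id x = x := by
  simp [exPost_apply]

lemma exPre_add (i : ℕ) (f g : M →ₗ[A] M') (x : EX A i M' N) :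
    exPre i N (f + g) x = exPre i N f x + exPre i N g x := by
  simp [exPre_apply, Abelian.Ext.mk₀_add]

lemma exPost_add (i : ℕ) (f g : N →ₗ[A] N') (x : EX A i M N) :
    exPost i M (f + g) x = exPost i M f x + exPost i M g x := by
  simp [exPost_apply, Abelian.Ext.mk₀_add]

lemma exPre_smul (i : ℕ) (r : A) (f : M →ₗ[A] M') (x : EX A i M' N) :
    exPre i N (r • f) x = r • exPre i N f x := by
  have h : ModuleCat.ofHom (r • f) = r • ModuleCat.ofHom f := rfl
  rw [exPre_apply, exPre_apply, h, Abelian.Ext.mk₀_smul, Abelian.Ext.smul_comp]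

lemma exPost_smul (i : ℕ) (r : A) (f : N →ₗ[A] N') (x : EX A i M N) :
    exPost i M (r • f) x = r • exPost i M f x := by
  have h : ModuleCat.ofHom (r • f) = r • ModuleCat.ofHom f := rfl
  rw [exPost_apply, exPost_apply, h, Abelian.Ext.mk₀_smul, Abelian.Ext.comp_smul]

lemma exPre_zero (i : ℕ) (x : EX A i M' N) :
    exPre i N (0 : M →ₗ[A] M') x = 0 := by
  simpa using exPre_smul i (0 : A) (0 : M →ₗ[A] M') x

lemma exPost_zero (i : ℕ) (x : EX A i M N) :
    exPost i M (0 : N →ₗ[A] N') x = 0 := by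
  simpa using exPost_smul i (0 : A) (0 : N →ₗ[A] N') x

lemma exPre_exPost (i : ℕ) (f : M →ₗ[A] M') (g : N →ₗ[A] N') (x : EX A i M' N) :
    exPre i N' f (exPost i M' g x) = exPost i M g (exPre i N f x) := by
  simp [exPre_apply, exPost_apply]

/-- degree zero -/
noncomputable def exHom (M N : Type u) [AddCommGroup M] [Module A M] [AddCommGroup N] [Module A N] :
    EX A 0 M N ≃ₗ[A] (M →ₗ[A] N) :=
  (Abelian.Ext.linearEquiv₀ (R := A)) ≪≫ₗ ModuleCat.homLinearEquiv

lemma exHom_symm (f : M →ₗ[A] N) : (exHom M N).symm f = Abelian.Ext.mk₀ (ModuleCat.ofHom f) := by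
  simp [exHom]
  rfl

lemma exHom_pre (f : M →ₗ[A] M') (x : EX A 0 M' N) :
    exHom M N (exPre 0 N f x) = exHom M' N x ∘ₗ f := by
  obtain ⟨g, rfl⟩ := (exHom M' N).symm.surjective x
  rw [← LinearEquiv.eq_symm_apply, LinearEquiv.apply_symm_apply, exHom_symm, exHom_symm,
    exPre_apply, Abelian.Ext.mk₀_comp_mk₀]
  rfl

lemma exHom_post (f : N →ₗ[A] N') (x : EX A 0 M N) :
    exHom M N' (exPost 0 M f x) = f ∘ₗ exHom M N x := by
  obtain ⟨g, rfl⟩ := (exHom M N).symm.surjective x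
  rw [← LinearEquiv.eq_symm_apply, LinearEquiv.apply_symm_apply, exHom_symm, exHom_symm,
    exPost_apply, Abelian.Ext.mk₀_comp_mk₀]
  rfl

lemma ex_shortExact {f : M →ₗ[A] M'} {g : M' →ₗ[A] M''} (hf : Function.Injective f)
    (hg : Function.Surjective g) (h : Function.Exact f g) :
    (ShortComplex.mk (ModuleCat.ofHom f) (ModuleCat.ofHom g)
      (by ext x; exact h.apply_apply_eq_zero x)).ShortExact := by
  refine ModuleCat.shortComplex_shortExact _ ?_ hf hg
  exact h

/-- connecting map, contravariant -/
lemma ex_les (N : Type u) [AddCommGroup N] [Module A N]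
    {f : M →ₗ[A] M'} {g : M' →ₗ[A] M''} (hf : Function.Injective f)
    (hg : Function.Surjective g) (h : Function.Exact f g) (i : ℕ) :
    ∃ δ : EX A i M N →ₗ[A] EX A (i+1) M'' N,
      Function.Exact (exPre i N f) δ ∧ Function.Exact δ (exPre (i+1) N g) := by
  have hS := ex_shortExact hf hg h
  refine ⟨Abelian.Ext.precompOfLinear hS.extClass A _ (add_comm 1 i), fun x => ⟨fun hx => ?_, ?_⟩,
    fun x => ⟨fun hx => ?_, ?_⟩⟩
  · exact Abelian.Ext.contravariant_sequence_exact₁ hS _ x (add_comm 1 i) hx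
  · rintro ⟨y, rfl⟩
    simp [exPre_apply]
    exact hS.extClass_comp_assoc y
  · exact Abelian.Ext.contravariant_sequence_exact₃ hS _ x hx (add_comm 1 i)
  · rintro ⟨y, rfl⟩
    simp [exPre_apply]
    exact hS.comp_extClass_assoc y (add_comm 1 i)

lemma ex_mid (N : Type u) [AddCommGroup N] [Module A N]
    {f : M →ₗ[A] M'} {g : M' →ₗ[A] M''} (hf : Function.Injective f)
    (hg : Function.Surjective g) (h : Function.Exact f g) (i : ℕ) :
    Function.Exact (exPre i N g) (exPre i N f) := by
  have hS := ex_shortExact hf hg h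
  refine fun x => ⟨fun hx => ?_, ?_⟩
  · exact Abelian.Ext.contravariant_sequence_exact₂ hS _ x hx
  · rintro ⟨y, rfl⟩
    rw [← exPre_comp, h.linearMap_comp_eq_zero, exPre_zero]

/-- connecting map, covariant -/
lemma ex_les' (N : Type u) [AddCommGroup N] [Module A N]
    {f : M →ₗ[A] M'} {g : M' →ₗ[A] M''} (hf : Function.Injective f)
    (hg : Function.Surjective g) (h : Function.Exact f g) (i : ℕ) :
    ∃ δ : EX A i N M'' →ₗ[A] EX A (i+1) N M,
      Function.Exact (exPost i N g) δ ∧ Function.Exact δ (exPost (i+1) N f) := by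
  have hS := ex_shortExact hf hg h
  refine ⟨Abelian.Ext.postcompOfLinear hS.extClass A _ rfl, fun x => ⟨fun hx => ?_, ?_⟩,
    fun x => ⟨fun hx => ?_, ?_⟩⟩
  · exact Abelian.Ext.covariant_sequence_exact₃ _ hS x rfl hx
  · rintro ⟨y, rfl⟩
    simp [exPost_apply]
    exact (congrArg (fun z => Abelian.Ext.comp y z rfl) hS.comp_extClass).trans (Abelian.Ext.comp_zero _ _ _ _ _)
  · exact Abelian.Ext.covariant_sequence_exact₁ _ hS x hx rfl
  · rintro ⟨y, rfl⟩
    simp [exPost_apply]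
    exact (congrArg (fun z => Abelian.Ext.comp y z rfl) hS.extClass_comp).trans (Abelian.Ext.comp_zero _ _ _ _ _)

lemma ex_mid' (N : Type u) [AddCommGroup N] [Module A N]
    {f : M →ₗ[A] M'} {g : M' →ₗ[A] M''} (hf : Function.Injective f)
    (hg : Function.Surjective g) (h : Function.Exact f g) (i : ℕ) :
    Function.Exact (exPost i N f) (exPost i N g) := by
  have hS := ex_shortExact hf hg h
  refine fun x => ⟨fun hx => ?_, ?_⟩
  · exact Abelian.Ext.covariant_sequence_exact₂ _ hS x hx
  · rintro ⟨y, rfl⟩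
    rw [← exPost_comp, h.linearMap_comp_eq_zero, exPost_zero]

lemma ex_projective (i : ℕ) (P N : Type u) [AddCommGroup P] [Module A P] [Module.Projective A P]
    [AddCommGroup N] [Module A N] : Subsingleton (EX A (i+1) P N) := by
  have : Projective (ModuleCat.of A P) := (IsProjective.iff_projective P).1 inferInstance
  exact subsingleton_of_forall_eq 0 (fun x => Abelian.Ext.eq_zero_of_projective x)

/-- isomorphism invariance -/
noncomputable def exPreEquiv (i : ℕ) (N : Type u) [AddCommGroup N] [Module A N] (e : M ≃ₗ[A] M') :
    EX A i M' N ≃ₗ[A] EX A i M N :=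
  LinearEquiv.ofLinearMap (exPre i N e.toLinearMap) (exPre i N e.symm.toLinearMap)
    (by ext x; simp [← exPre_comp, exPre_id])
    (by ext x; simp [← exPre_comp, exPre_id])

noncomputable def exPostEquiv (i : ℕ) (N : Type u) [AddCommGroup N] [Module A N] (e : M ≃ₗ[A] M') :
    EX A i N M ≃ₗ[A] EX A i N M' :=
  LinearEquiv.ofLinearMap (exPost i N e.toLinearMap) (exPost i N e.symm.toLinearMap)
    (by ext x; simp [← exPost_comp, exPost_id])
    (by ext x; simp [← exPost_comp, exPost_id])

end LK2

section LK3

variable {A : Type u} [CommRing A] {M M' M'' N N' N'' : Type u}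
  [AddCommGroup M] [Module A M] [AddCommGroup M'] [Module A M'] [AddCommGroup M''] [Module A M'']
  [AddCommGroup N] [Module A N] [AddCommGroup N'] [Module A N'] [AddCommGroup N''] [Module A N'']

lemma exact_sub_mid {a : N →ₗ[A] N'} {b : N' →ₗ[A] N''} (h : Function.Exact a b)
    (h1 : Subsingleton N) (h2 : Subsingleton N'') : Subsingleton N' := by
  refine subsingleton_of_forall_eq 0 fun x => ?_
  obtain ⟨y, rfl⟩ := (h x).1 (Subsingleton.elim _ _)
  rw [Subsingleton.elim y 0, map_zero]

section seq
variable {f : M →ₗ[A] M'} {g : M' →ₗ[A] M''} (hf : Function.Injective f)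
    (hg : Function.Surjective g) (h : Function.Exact f g)
include hf hg h

lemma van_mid {i : ℕ} (h1 : Subsingleton (EX A i M N)) (h2 : Subsingleton (EX A i M'' N)) :
    Subsingleton (EX A i M' N) :=
  exact_sub_mid (ex_mid N hf hg h i) h2 h1

lemma van_left {i : ℕ} (h1 : Subsingleton (EX A i M' N)) (h2 : Subsingleton (EX A (i+1) M'' N)) :
    Subsingleton (EX A i M N) := by
  obtain ⟨δ, e1, e2⟩ := ex_les N hf hg h i
  exact exact_sub_mid e1 h1 h2

lemma van_right {i : ℕ} (h1 : Subsingleton (EX A i M N)) (h2 : Subsingleton (EX A (i+1) M' N)) :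
    Subsingleton (EX A (i+1) M'' N) := by
  obtain ⟨δ, e1, e2⟩ := ex_les N hf hg h i
  exact exact_sub_mid e2 h1 h2

lemma van_mid' {i : ℕ} (h1 : Subsingleton (EX A i N M)) (h2 : Subsingleton (EX A i N M'')) :
    Subsingleton (EX A i N M') :=
  exact_sub_mid (ex_mid' N hf hg h i) h1 h2

lemma van_left' {i : ℕ} (h1 : Subsingleton (EX A (i+1) N M')) (h2 : Subsingleton (EX A i N M'')) :
    Subsingleton (EX A (i+1) N M) := by
  obtain ⟨δ, e1, e2⟩ := ex_les' N hf hg h i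
  exact exact_sub_mid e2 h2 h1

lemma van_right' {i : ℕ} (h1 : Subsingleton (EX A (i+1) N M)) (h2 : Subsingleton (EX A i N M')) :
    Subsingleton (EX A i N M'') := by
  obtain ⟨δ, e1, e2⟩ := ex_les' N hf hg h i
  exact exact_sub_mid e1 h2 h1

/-- Hom-Ext sequence in low degree -/
lemma dual_les (K : Type u) [AddCommGroup K] [Module A K] :
    ∃ δ : (M →ₗ[A] K) →ₗ[A] EX A 1 M'' K,
      Function.Exact (f.lcomp A K) δ ∧ Function.Exact δ (exPre 1 K g) := by
  obtain ⟨δ, e1, e2⟩ := ex_les K hf hg h 0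
  refine ⟨δ ∘ₗ (exHom M K).symm.toLinearMap, fun φ => ?_, fun φ => ?_⟩
  · refine (e1 _).trans ⟨?_, ?_⟩
    · rintro ⟨y, hy⟩
      refine ⟨exHom _ _ y, ?_⟩
      have h1 := exHom_pre f y
      rw [hy] at h1
      exact h1.symm.trans (LinearEquiv.apply_symm_apply _ _)
    · rintro ⟨y, rfl⟩
      refine ⟨(exHom _ _).symm y, ?_⟩
      refine (exHom M K).injective ((exHom_pre _ _).trans ?_)
      rw [LinearEquiv.apply_symm_apply]
      exact (LinearEquiv.apply_symm_apply _ _).symm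
  · refine (e2 _).trans ⟨?_, ?_⟩
    · rintro ⟨y, hy⟩
      exact ⟨exHom _ _ y, by simpa using hy⟩
    · rintro ⟨y, hy⟩
      exact ⟨_, hy⟩

lemma dual_surj (K : Type u) [AddCommGroup K] [Module A K] (h1 : Subsingleton (EX A 1 M'' K)) :
    Function.Surjective (f.lcomp A K) := by
  obtain ⟨δ, e1, e2⟩ := dual_les hf hg h K
  intro φ
  exact (e1 φ).1 (Subsingleton.elim _ _)

lemma dual_ext1 (K : Type u) [AddCommGroup K] [Module A K] (h1 : Subsingleton (EX A 1 M' K))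
    (hs : Function.Surjective (f.lcomp A K)) : Subsingleton (EX A 1 M'' K) := by
  obtain ⟨δ, e1, e2⟩ := dual_les hf hg h K
  refine subsingleton_of_forall_eq 0 fun x => ?_
  obtain ⟨y, rfl⟩ := (e2 x).1 (Subsingleton.elim _ _)
  exact (e1 y).2 (hs y)

end seq

variable (K : Type u) [AddCommGroup K] [Module A K]

/-- vanishing of positive Ext into K -/
def EV (X : Type u) [AddCommGroup X] [Module A X] : Prop :=
  ∀ i : ℕ, Subsingleton (EX A (i+1) X K)

lemma ev_iff (X : Type u) [AddCommGroup X] [Module A X] :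
    (∀ i : ℕ, 0 < i → Subsingleton (extM A i X K)) ↔ EV (A := A) K X := by
  refine ⟨fun h i => (extM_subsingleton _ _ _).1 (h _ (Nat.succ_pos i)), fun h i hi => ?_⟩
  obtain ⟨j, rfl⟩ := Nat.exists_eq_succ_of_ne_zero hi.ne'
  exact (extM_subsingleton _ _ _).2 (h j)

lemma ev_equiv (e : M ≃ₗ[A] M') (h : EV (A := A) K M) : EV (A := A) K M' := fun i =>
  (exPreEquiv (i+1) K e).toEquiv.subsingleton_congr.2 (h i)

lemma gk_iff (X : Type u) [AddCommGroup X] [Module A X] : IsGKDimZero A K X ↔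
    Module.Finite A X ∧ Function.Bijective (evalK A K X) ∧ EV (A := A) K X ∧
      EV (A := A) K (X →ₗ[A] K) := by
  unfold IsGKDimZero
  rw [ev_iff, ev_iff]

lemma gk_finite (h : IsGKDimZero A K M) : Module.Finite A M := h.1
variable {K}
lemma gk_bij (h : IsGKDimZero A K M) : Function.Bijective (evalK A K M) := h.2.1
lemma gk_ev (h : IsGKDimZero A K M) : EV (A := A) K M := ((gk_iff K M).1 h).2.2.1
lemma gk_evd (h : IsGKDimZero A K M) : EV (A := A) K (M →ₗ[A] K) := ((gk_iff K M).1 h).2.2.2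

/-- perfect pairing criterion -/
lemma gk_pairing (b : M →ₗ[A] N →ₗ[A] K) (h1 : Function.Bijective b) (h2 : Function.Bijective b.flip)
    [Module.Finite A M] (e1 : EV (A := A) K M) (e2 : EV (A := A) K N) : IsGKDimZero A K M := by
  let e : N ≃ₗ[A] (M →ₗ[A] K) := LinearEquiv.ofBijective b.flip h2
  refine (gk_iff K M).2 ⟨inferInstance, ?_, e1, ev_equiv K e e2⟩
  have : ∀ m, (e.toLinearMap.lcomp A K) (evalK A K M m) = b m := by
    intro m
    ext n
    rfl
  have hc : Function.Bijective (e.toLinearMap.lcomp A K) := by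
    refine ⟨fun x y hxy => ?_, fun x => ⟨x ∘ₗ e.symm.toLinearMap, ?_⟩⟩
    · ext m
      obtain ⟨n, rfl⟩ := e.surjective m
      exact LinearMap.congr_fun hxy n
    · ext n
      simp [LinearMap.lcomp_apply]
  refine (Function.Bijective.of_comp_iff' hc _).1 ?_
  convert h1 using 1
  ext m : 1
  exact this m

lemma gk_equiv (e : M ≃ₗ[A] M') (h : IsGKDimZero A K M) : IsGKDimZero A K M' := by
  have := h.1
  have : Module.Finite A M' := Module.Finite.equiv e
  refine gk_pairing (N := M →ₗ[A] K) (evalK A K M ∘ₗ e.symm.toLinearMap) ?_ ?_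
    (ev_equiv K e (gk_ev h)) (gk_evd h)
  · exact (gk_bij h).comp e.symm.bijective
  · refine ⟨fun x y hxy => ?_, fun x => ⟨x ∘ₗ e.toLinearMap, ?_⟩⟩
    · ext m
      have := LinearMap.congr_fun hxy (e m)
      simpa [evalK] using this
    · ext n
      simp [evalK]

lemma finite_hom [IsNoetherianRing A] [Module.Finite A M] [Module.Finite A N] :
    Module.Finite A (M →ₗ[A] N) := inferInstance

lemma gk_dual [IsNoetherianRing A] [Module.Finite A K] (h : IsGKDimZero A K M) :
    IsGKDimZero A K (M →ₗ[A] K) := by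
  have := h.1
  refine gk_pairing (N := M) LinearMap.id ?_ ?_ (gk_evd h) (gk_ev h)
  · exact Function.bijective_id
  · exact gk_bij h

section seq
variable {f : M →ₗ[A] M'} {g : M' →ₗ[A] M''} (hf : Function.Injective f)
    (hg : Function.Surjective g) (h : Function.Exact f g)

lemma evalK_nat (f : M →ₗ[A] M') (m : M) :
    (f.lcomp A K).lcomp A K (evalK A K M m) = evalK A K M' (f m) := rfl

include hf hg h in
/-- dual sequence is short exact -/
lemma dual_ses (h1 : Subsingleton (EX A 1 M'' K)) :
    Function.Injective (g.lcomp A K) ∧ Function.Surjective (f.lcomp A K) ∧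
      Function.Exact (g.lcomp A K) (f.lcomp A K) :=
  ⟨LinearMap.lcomp_injective_of_surjective g hg, dual_surj hf hg h K h1,
    LinearMap.exact_lcomp_of_exact_of_surjective K h hg⟩

include hf hg h in
lemma gk_left [IsNoetherianRing A] (hB : IsGKDimZero A K M') (hC : IsGKDimZero A K M'') :
    IsGKDimZero A K M := by
  have := hB.1
  obtain ⟨d1, d2, d3⟩ := dual_ses hf hg h (gk_ev hC 0)
  have e1 := LinearMap.lcomp_injective_of_surjective (S := A) (N := K) _ d2
  have e3 := LinearMap.exact_lcomp_of_exact_of_surjective K d3 d2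
  have e2 : Function.Surjective ((g.lcomp A K).lcomp A K) := by
    intro x
    obtain ⟨c, rfl⟩ := (gk_bij hC).2 x
    obtain ⟨b, rfl⟩ := hg c
    exact ⟨_, evalK_nat g b⟩
  refine (gk_iff K M).2 ⟨Module.Finite.of_injective f hf, ⟨?_, ?_⟩, fun i => ?_, fun i => ?_⟩
  · intro a a' haa
    apply hf
    apply (gk_bij hB).1
    rw [← evalK_nat, ← evalK_nat, haa]
  · intro z
    obtain ⟨b, hb⟩ := (gk_bij hB).2 ((f.lcomp A K).lcomp A K z)
    have : g b = 0 := by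
      apply (gk_bij hC).1
      rw [← evalK_nat, hb, map_zero]
      exact e3.apply_apply_eq_zero z
    obtain ⟨a, rfl⟩ := (h b).1 this
    refine ⟨a, e1 ?_⟩
    rw [← hb]
    rfl
  · exact van_left hf hg h (gk_ev hB i) (gk_ev hC (i+1))
  · cases i with
    | zero => exact dual_ext1 d1 d2 d3 K (gk_evd hB 0) e2
    | succ i => exact van_right d1 d2 d3 (gk_evd hC i) (gk_evd hB (i+1))

include hf hg h in
lemma gk_mid (hA : IsGKDimZero A K M) (hC : IsGKDimZero A K M'') :
    IsGKDimZero A K M' := by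
  have := hA.1
  have := hC.1
  obtain ⟨d1, d2, d3⟩ := dual_ses hf hg h (gk_ev hC 0)
  have e1 := LinearMap.lcomp_injective_of_surjective (S := A) (N := K) _ d2
  have e3 := LinearMap.exact_lcomp_of_exact_of_surjective K d3 d2
  refine (gk_iff K M').2 ⟨?_, ⟨?_, ?_⟩, fun i => ?_, fun i => ?_⟩
  · exact Module.Finite.of_exact h hg
  · rw [injective_iff_map_eq_zero]
    intro b hb
    have : g b = 0 := by
      apply (gk_bij hC).1
      rw [← evalK_nat, hb, map_zero, map_zero]
    obtain ⟨a, rfl⟩ := (h b).1 this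
    have : a = 0 := by
      apply (gk_bij hA).1
      apply e1
      rw [evalK_nat, hb, map_zero, map_zero]
    rw [this, map_zero]
  · intro z
    obtain ⟨c, hc⟩ := (gk_bij hC).2 ((g.lcomp A K).lcomp A K z)
    obtain ⟨b, rfl⟩ := hg c
    have : (g.lcomp A K).lcomp A K (z - evalK A K M' b) = 0 := by
      rw [map_sub, evalK_nat, hc, sub_self]
    obtain ⟨y, hy⟩ := (e3 _).1 this
    obtain ⟨a, rfl⟩ := (gk_bij hA).2 y
    rw [evalK_nat] at hy
    refine ⟨f a + b, ?_⟩
    rw [map_add, hy, sub_add_cancel]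
  · exact van_mid hf hg h (gk_ev hA i) (gk_ev hC i)
  · exact van_mid d1 d2 d3 (gk_evd hC i) (gk_evd hA i)

include hf hg h in
lemma gk_right (hA : IsGKDimZero A K M) (hB : IsGKDimZero A K M')
    (hC : Subsingleton (EX A 1 M'' K)) :
    IsGKDimZero A K M'' := by
  have := hB.1
  obtain ⟨d1, d2, d3⟩ := dual_ses hf hg h hC
  have e1 := LinearMap.lcomp_injective_of_surjective (S := A) (N := K) _ d2
  have e3 := LinearMap.exact_lcomp_of_exact_of_surjective K d3 d2
  have e2 := dual_surj d1 d2 d3 K (gk_evd hA 0)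
  refine (gk_iff K M'').2 ⟨Module.Finite.of_surjective g hg, ⟨?_, ?_⟩, fun i => ?_, fun i => ?_⟩
  · rw [injective_iff_map_eq_zero]
    intro c hc
    obtain ⟨b, rfl⟩ := hg c
    rw [← evalK_nat] at hc
    obtain ⟨y, hy⟩ := (e3 _).1 hc
    obtain ⟨a, rfl⟩ := (gk_bij hA).2 y
    rw [evalK_nat] at hy
    rw [← (gk_bij hB).1 hy]
    exact h.apply_apply_eq_zero a
  · intro z
    obtain ⟨y, rfl⟩ := e2 z
    obtain ⟨b, rfl⟩ := (gk_bij hB).2 y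
    exact ⟨g b, rfl⟩
  · cases i with
    | zero => exact hC
    | succ i => exact van_right hf hg h (gk_ev hA i) (gk_ev hB (i+1))
  · exact van_left d1 d2 d3 (gk_evd hB i) (gk_evd hA (i+1))

end seq

/-- converted semidualizing -/
lemma sd_ev (hK : IsSemidualizing A K) : EV (A := A) K K := (ev_iff K K).1 hK.2.2

lemma gk_self (hK : IsSemidualizing A K) : IsGKDimZero A K A := by
  refine gk_pairing (N := K) (LinearMap.lsmul A K) hK.2.1 ?_
    (fun i => ex_projective i A K) (sd_ev hK)
  refine ⟨fun x y hxy => ?_, fun φ => ⟨φ 1, ?_⟩⟩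
  · simpa using LinearMap.congr_fun hxy 1
  · ext
    simp

lemma gk_sub [Subsingleton M] : IsGKDimZero A K M := by
  have hx : ∀ (X : Type u) [AddCommGroup X] [Module A X], Subsingleton X → EV (A := A) K X := by
    intro X _ _ _ i
    exact ex_projective i X K
  have : Subsingleton (M →ₗ[A] K) := ⟨fun x y => by ext m; rw [Subsingleton.elim m 0, map_zero, map_zero]⟩
  refine (gk_iff K M).2 ⟨inferInstance, ⟨fun x y _ => Subsingleton.elim _ _, fun z => ⟨0, ?_⟩⟩,
    hx _ inferInstance, hx _ inferInstance⟩
  ext φ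
  rw [Subsingleton.elim φ 0, map_zero, map_zero]

lemma gk_prod (h1 : IsGKDimZero A K M) (h2 : IsGKDimZero A K M') : IsGKDimZero A K (M × M') :=
  gk_mid (f := LinearMap.inl A M M') (g := LinearMap.snd A M M') LinearMap.inl_injective
    LinearMap.snd_surjective Function.Exact.inl_snd h1 h2

lemma gk_pow (h : IsGKDimZero A K M) (n : ℕ) : IsGKDimZero A K (Fin n → M) := by
  induction n with
  | zero => exact gk_sub
  | succ n ih => exact gk_equiv (Fin.consLinearEquiv A (fun _ => M)) (gk_prod h ih)

lemma gk_K [IsNoetherianRing A] (hK : IsSemidualizing A K) : IsGKDimZero A K K := by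
  have := hK.1
  have := gk_dual (gk_self hK)
  exact gk_equiv (LinearMap.ringLmapEquivSelf A A K) this

end LK3

section LK4

variable {A : Type u} [CommRing A] {M M' M'' N N' N'' : Type u}
  [AddCommGroup M] [Module A M] [AddCommGroup M'] [Module A M'] [AddCommGroup M''] [Module A M'']
  [AddCommGroup N] [Module A N] [AddCommGroup N'] [Module A N'] [AddCommGroup N''] [Module A N'']

/-- short exact sequence -/
structure SES (f : M →ₗ[A] M') (g : M' →ₗ[A] M'') : Prop where
  inj : Function.Injective f
  surj : Function.Surjective g
  exact : Function.Exact f g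

lemma SES.ker (g : M' →ₗ[A] M'') (hg : Function.Surjective g) :
    SES (LinearMap.ker g).subtype g :=
  ⟨Submodule.subtype_injective _, hg, LinearMap.exact_subtype_ker_map g⟩

lemma SES.range {f : M →ₗ[A] M'} (hf : Function.Injective f) :
    SES f (LinearMap.range f).mkQ :=
  ⟨hf, Submodule.mkQ_surjective _, LinearMap.exact_map_mkQ_range f⟩

/-- kernel identification -/
noncomputable def SES.kerEquiv {f : M →ₗ[A] M'} {g : M' →ₗ[A] M''} (h : SES f g) :
    M ≃ₗ[A] LinearMap.ker g :=
  (LinearEquiv.ofInjective f h.inj) ≪≫ₗ LinearEquiv.ofEq _ _ h.exact.linearMap_ker_eq.symm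

/-- cokernel identification -/
noncomputable def SES.quotEquiv {f : M →ₗ[A] M'} {g : M' →ₗ[A] M''} (h : SES f g) :
    (M' ⧸ LinearMap.range f) ≃ₗ[A] M'' :=
  (Submodule.quotEquivOfEq _ _ h.exact.linearMap_ker_eq.symm) ≪≫ₗ
    g.quotKerEquivOfSurjective h.surj

lemma SES.pullback {f : M →ₗ[A] M'} {g : M' →ₗ[A] M''} (h : SES f g)
    {f' : N →ₗ[A] N'} {g' : N' →ₗ[A] M''} (h' : SES f' g') :
    ∃ (W : Type u) (_ : AddCommGroup W) (_ : Module A W) (a : N →ₗ[A] W) (b : W →ₗ[A] M')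
      (a' : M →ₗ[A] W) (b' : W →ₗ[A] N'), SES a b ∧ SES a' b' ∧ g ∘ₗ b = g' ∘ₗ b' := by
  let W := LinearMap.ker (g ∘ₗ LinearMap.fst A M' N' - g' ∘ₗ LinearMap.snd A M' N')
  have hW : ∀ x : M' × N', x ∈ W ↔ g x.1 = g' x.2 := by
    intro x
    simp [W, sub_eq_zero]
  refine ⟨W, inferInstance, inferInstance,
    LinearMap.codRestrict W (LinearMap.inr A M' N' ∘ₗ f') (fun x => ?_),
    LinearMap.fst A M' N' ∘ₗ W.subtype,
    LinearMap.codRestrict W (LinearMap.inl A M' N' ∘ₗ f) (fun x => ?_),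
    LinearMap.snd A M' N' ∘ₗ W.subtype, ⟨?_, ?_, ?_⟩, ⟨?_, ?_, ?_⟩, ?_⟩
  · rw [hW]
    simp [h'.exact.apply_apply_eq_zero]
  · rw [hW]
    simp [h.exact.apply_apply_eq_zero]
  · intro x y hxy
    apply h'.inj
    simpa using congrArg (fun w : W => w.1.2) hxy
  · intro x
    obtain ⟨y, hy⟩ := h'.surj (g x)
    exact ⟨⟨(x, y), (hW _).2 hy.symm⟩, rfl⟩
  · rintro ⟨⟨x, y⟩, hw⟩
    have hw' := (hW _).1 hw
    constructor
    · intro hx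
      change x = 0 at hx
      subst hx
      obtain ⟨z, rfl⟩ := (h'.exact y).1 (by simpa using hw'.symm)
      exact ⟨z, rfl⟩
    · rintro ⟨z, hz⟩
      exact (congrArg (fun w : W => w.1.1) hz).symm
  · intro x y hxy
    apply h.inj
    simpa using congrArg (fun w : W => w.1.1) hxy
  · intro x
    obtain ⟨y, hy⟩ := h.surj (g' x)
    exact ⟨⟨(y, x), (hW _).2 hy⟩, rfl⟩
  · rintro ⟨⟨x, y⟩, hw⟩
    have hw' := (hW _).1 hw
    constructor
    · intro hx
      change y = 0 at hx
      subst hx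
      obtain ⟨z, rfl⟩ := (h.exact x).1 (by simpa using hw')
      exact ⟨z, rfl⟩
    · rintro ⟨z, hz⟩
      exact (congrArg (fun w : W => w.1.2) hz).symm
  · ext ⟨w, hw⟩
    exact (hW _).1 hw

lemma SES.comp_ses {i : N →ₗ[A] N'} {p : N' →ₗ[A] M'} (h' : SES i p)
    {f : M →ₗ[A] M'} {g : M' →ₗ[A] M''} (h : SES f g) :
    ∃ (H : Type u) (_ : AddCommGroup H) (_ : Module A H) (j : H →ₗ[A] N')
      (a : N →ₗ[A] H) (b : H →ₗ[A] M), SES j (g ∘ₗ p) ∧ SES a b ∧ j ∘ₗ a = i ∧ p ∘ₗ j = f ∘ₗ b := by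
  have hb : ∀ x : LinearMap.ker (g ∘ₗ p), p x ∈ LinearMap.ker g := fun x => x.2
  have hs : ∀ x, f (h.kerEquiv.symm x) = x := by
    intro x
    obtain ⟨y, rfl⟩ := h.kerEquiv.surjective x
    rw [LinearEquiv.symm_apply_apply]
    rfl
  refine ⟨LinearMap.ker (g ∘ₗ p), inferInstance, inferInstance, Submodule.subtype _,
    LinearMap.codRestrict _ i (fun x => ?_),
    h.kerEquiv.symm.toLinearMap ∘ₗ
      LinearMap.codRestrict (LinearMap.ker g) (p ∘ₗ Submodule.subtype _) hb,
    SES.ker _ (h.surj.comp h'.surj), ⟨?_, ?_, ?_⟩, ?_, ?_⟩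
  · simp [h'.exact.apply_apply_eq_zero]
  · intro x y hxy
    exact h'.inj (congrArg Subtype.val hxy)
  · intro x
    obtain ⟨y, hy⟩ := h'.surj (f x)
    refine ⟨⟨y, ?_⟩, ?_⟩
    · simp [hy, h.exact.apply_apply_eq_zero]
    · apply h.inj
      exact (hs _).trans hy
  · rintro ⟨x, hx⟩
    constructor
    · intro hz
      have : p x = 0 := by
        have := (hs _).symm.trans (congrArg f hz)
        rw [map_zero] at this
        exact this
      obtain ⟨y, rfl⟩ := (h'.exact x).1 this
      exact ⟨y, rfl⟩
    · rintro ⟨y, hy⟩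
      apply h.inj
      rw [map_zero]
      refine (hs _).trans ?_
      have : x = i y := (congrArg Subtype.val hy).symm
      change p x = 0
      rw [this, h'.exact.apply_apply_eq_zero]
  · rfl
  · ext x
    exact (hs ⟨p x, hb x⟩).symm

lemma exists_free (X : Type u) [AddCommGroup X] [Module A X] [Module.Finite A X] :
    ∃ (n : ℕ) (L : Type u) (_ : AddCommGroup L) (_ : Module A L) (i : L →ₗ[A] (Fin n → A))
      (p : (Fin n → A) →ₗ[A] X), SES i p := by
  obtain ⟨n, p, hp⟩ := Module.Finite.exists_fin' A X
  exact ⟨n, LinearMap.ker p, inferInstance, inferInstance, _, p, SES.ker p hp⟩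

variable (K : Type u) [AddCommGroup K] [Module A K]

/-- unbundled gdim -/
abbrev GLE (n : ℕ) (X : Type u) [AddCommGroup X] [Module A X] : Prop :=
  GKDimLE A K n (ModuleCat.of A X)

variable {K}

lemma gl_zero : GLE (A := A) K 0 M ↔ IsGKDimZero A K M := Iff.rfl

lemma gl_equiv {n : ℕ} (e : M ≃ₗ[A] M') (h : GLE (A := A) K n M) : GLE (A := A) K n M' := by
  cases n with
  | zero => exact gk_equiv e h
  | succ n =>
    obtain ⟨G, f, h1, h2, h3⟩ := h
    refine ⟨G, e.toLinearMap ∘ₗ f, h1, e.surjective.comp h2, ?_⟩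
    rw [LinearEquiv.ker_comp]
    exact h3

lemma gl_succ {n : ℕ} {f : M →ₗ[A] M'} {g : M' →ₗ[A] M''} (h : SES f g)
    (h1 : IsGKDimZero A K M') (h2 : GLE (A := A) K n M) : GLE (A := A) K (n+1) M'' :=
  ⟨ModuleCat.of A M', g, h1, h.surj, gl_equiv h.kerEquiv h2⟩

lemma gl_cases {n : ℕ} (h : GLE (A := A) K (n+1) M) :
    ∃ (Y : Type u) (_ : AddCommGroup Y) (_ : Module A Y) (G : Type u) (_ : AddCommGroup G)
      (_ : Module A G) (i : Y →ₗ[A] G) (p : G →ₗ[A] M), SES i p ∧ IsGKDimZero A K G ∧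
      GLE (A := A) K n Y := by
  obtain ⟨G, f, h1, h2, h3⟩ := h
  exact ⟨LinearMap.ker f, inferInstance, inferInstance, G, inferInstance, inferInstance, _, f,
    SES.ker f h2, h1, h3⟩

lemma gl_finite {n : ℕ} (h : GLE (A := A) K n M) : Module.Finite A M := by
  cases n with
  | zero => exact h.1
  | succ n =>
    obtain ⟨G, f, h1, h2, h3⟩ := h
    have := h1.1
    exact Module.Finite.of_surjective f h2

lemma gl_step {n : ℕ} (h : GLE (A := A) K n M) : GLE (A := A) K (n+1) M := by
  induction n generalizing M with
  | zero =>
    refine gl_succ (f := (0 : PUnit.{u+1} →ₗ[A] M)) (g := LinearMap.id) ⟨?_, ?_, ?_⟩ h gk_sub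
    · exact fun _ _ _ => rfl
    · exact fun x => ⟨x, rfl⟩
    · intro x
      simp [eq_comm]
  | succ n ih =>
    obtain ⟨Y, _, _, G, _, _, i, p, hs, h1, h2⟩ := gl_cases h
    exact gl_succ hs h1 (ih h2)

lemma gl_mono {n m : ℕ} (hnm : n ≤ m) (h : GLE (A := A) K n M) : GLE (A := A) K m M := by
  induction m, hnm using Nat.le_induction with
  | base => exact h
  | succ m _ ih => exact gl_step ih

lemma gl_of_gk {n : ℕ} (h : IsGKDimZero A K M) : GLE (A := A) K n M :=
  gl_mono (Nat.zero_le n) h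

lemma gl_van {n : ℕ} (h : GLE (A := A) K n M) (i : ℕ) (hi : n < i) :
    Subsingleton (EX A i M K) := by
  induction n generalizing M i with
  | zero =>
    obtain ⟨j, rfl⟩ := Nat.exists_eq_succ_of_ne_zero hi.ne'
    exact gk_ev h j
  | succ n ih =>
    obtain ⟨Y, _, _, G, _, _, i', p, hs, h1, h2⟩ := gl_cases h
    obtain ⟨j, rfl⟩ := Nat.exists_eq_succ_of_ne_zero (by omega : i ≠ 0)
    exact van_right hs.inj hs.surj hs.exact (ih h2 j (by omega)) (gk_ev h1 j)

variable [IsNoetherianRing A]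

lemma gl_h1 {n : ℕ} {f : M →ₗ[A] M'} {g : M' →ₗ[A] M''} (h : SES f g)
    (hB : GLE (A := A) K n M') (hC : IsGKDimZero A K M'') : GLE (A := A) K n M := by
  cases n with
  | zero => exact gk_left h.inj h.surj h.exact hB hC
  | succ n =>
    obtain ⟨Y, _, _, G, _, _, i, p, hs, h1, h2⟩ := gl_cases hB
    obtain ⟨H, _, _, j, a, b, s1, s2, _⟩ := hs.comp_ses h
    exact gl_succ s2 (gk_left s1.inj s1.surj s1.exact h1 hC) h2

variable (A K) in
/-- extension closure -/
def K1 (n : ℕ) : Prop := ∀ (M M' M'' : Type u) [AddCommGroup M] [Module A M] [AddCommGroup M']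
  [Module A M'] [AddCommGroup M''] [Module A M''] (f : M →ₗ[A] M') (g : M' →ₗ[A] M''),
  SES f g → GLE (A := A) K n M → GLE (A := A) K n M'' → GLE (A := A) K n M'

lemma g3_aux {n : ℕ} (k1 : K1 A K n) {f : M →ₗ[A] M'} {g : M' →ₗ[A] M''} (h : SES f g)
    (hB : IsGKDimZero A K M') (hC : GLE (A := A) K (n+1) M'') : GLE (A := A) K n M := by
  obtain ⟨Y, _, _, G, _, _, i, p, hs, h1, h2⟩ := gl_cases hC
  obtain ⟨W, _, _, a, b, a', b', s1, s2, _⟩ := h.pullback hs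
  exact gl_h1 s2 (k1 _ _ _ _ _ s1 h2 (gl_of_gk hB)) h1

lemma k2_aux (hK : IsSemidualizing A K) {n : ℕ} (k1 : K1 A K n) {f : M →ₗ[A] M'}
    {g : M' →ₗ[A] M''} (h : SES f g)
    (hB : GLE (A := A) K n M') (hC : GLE (A := A) K (n+1) M'') : GLE (A := A) K n M := by
  have := gl_finite hC
  obtain ⟨q, L, _, _, i, p, hs⟩ := exists_free (A := A) M''
  obtain ⟨W, _, _, a, b, a', b', s1, s2, _⟩ := h.pullback hs
  have hF : IsGKDimZero A K (Fin q → A) := gk_pow (gk_self hK) _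
  exact gl_h1 s2 (k1 _ _ _ _ _ s1 (g3_aux k1 hs hF hC) hB) hF

lemma k1_all (hK : IsSemidualizing A K) (n : ℕ) : K1 A K n := by
  induction n with
  | zero =>
    intro M M' M'' _ _ _ _ _ _ f g h h1 h2
    exact gk_mid h.inj h.surj h.exact h1 h2
  | succ n ih =>
    intro M M' M'' _ _ _ _ _ _ f g h h1 h2
    have := gl_finite h1
    have := gl_finite h2
    have : Module.Finite A M' := Module.Finite.of_exact h.exact h.surj
    obtain ⟨a, L, _, _, i, p, hs⟩ := exists_free (A := A) M'
    have hF : IsGKDimZero A K (Fin a → A) := gk_pow (gk_self hK) _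
    obtain ⟨H, _, _, j, a, b, s1, s2, _⟩ := hs.comp_ses h
    exact gl_succ hs hF (k2_aux hK ih s2 (g3_aux ih s1 hF h2) h1)

variable (hK : IsSemidualizing A K) {n : ℕ} {f : M →ₗ[A] M'} {g : M' →ₗ[A] M''} (h : SES f g)
include hK h

lemma gl_mid (h1 : GLE (A := A) K n M) (h2 : GLE (A := A) K n M'') : GLE (A := A) K n M' :=
  k1_all hK n _ _ _ _ _ h h1 h2

lemma gl_left (h1 : GLE (A := A) K n M') (h2 : GLE (A := A) K (n+1) M'') : GLE (A := A) K n M :=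
  k2_aux hK (k1_all hK n) h h1 h2

lemma gl_right (h1 : GLE (A := A) K n M) (h2 : GLE (A := A) K (n+1) M') :
    GLE (A := A) K (n+1) M'' := by
  have := gl_finite h2
  obtain ⟨a, L, _, _, i, p, hs⟩ := exists_free (A := A) M'
  have hF : IsGKDimZero A K (Fin a → A) := gk_pow (gk_self hK) _
  obtain ⟨H, _, _, j, a, b, s1, s2, _⟩ := hs.comp_ses h
  exact gl_succ s1 hF (gl_mid hK s2 (gl_left hK hs (gl_of_gk hF) h2) h1)

omit [IsNoetherianRing A] hK h in
lemma gl_down (h1 : GLE (A := A) K (n+1) M) (h2 : Subsingleton (EX A (n+1) M K)) :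
    GLE (A := A) K n M := by
  induction n generalizing M with
  | zero =>
    obtain ⟨Y, _, _, G, _, _, i, p, hs, h3, h4⟩ := gl_cases h1
    exact gk_right hs.inj hs.surj hs.exact h4 h3 h2
  | succ n ih =>
    obtain ⟨Y, _, _, G, _, _, i, p, hs, h3, h4⟩ := gl_cases h1
    exact gl_succ hs h3 (ih h4 (van_left hs.inj hs.surj hs.exact (gk_ev h3 n) h2))

omit h in
lemma gl_pow (h1 : GLE (A := A) K n M) (a : ℕ) : GLE (A := A) K n (Fin a → M) := by
  induction a with
  | zero => exact gl_of_gk gk_sub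
  | succ a ih =>
    refine gl_equiv (Fin.consLinearEquiv A (fun _ => M)) ?_
    exact gl_mid hK (f := LinearMap.inl A M _) (g := LinearMap.snd A M (Fin a → M))
      ⟨LinearMap.inl_injective, LinearMap.snd_surjective, Function.Exact.inl_snd⟩ h1 ih

end LK4

section LK5

variable {A : Type u} [CommRing A] {M M' M'' N N' N'' : Type u}
  [AddCommGroup M] [Module A M] [AddCommGroup M'] [Module A M'] [AddCommGroup M''] [Module A M'']
  [AddCommGroup N] [Module A N] [AddCommGroup N'] [Module A N'] [AddCommGroup N''] [Module A N'']

lemma ex_shift (N : Type u) [AddCommGroup N] [Module A N]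
    {f : M →ₗ[A] M'} {g : M' →ₗ[A] M''} (h : SES f g) (i : ℕ)
    (h1 : Subsingleton (EX A i M' N)) (h2 : Subsingleton (EX A (i+1) M' N)) :
    Nonempty (EX A i M N ≃ₗ[A] EX A (i+1) M'' N) := by
  obtain ⟨δ, e1, e2⟩ := ex_les N h.inj h.surj h.exact i
  refine ⟨LinearEquiv.ofBijective δ ⟨?_, ?_⟩⟩
  · rw [injective_iff_map_eq_zero]
    intro x hx
    obtain ⟨y, rfl⟩ := (e1 x).1 hx
    rw [Subsingleton.elim y 0, map_zero]
  · intro x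
    exact (e2 x).1 (Subsingleton.elim _ _)

/-- injectivity of post-composition -/
lemma exPost_inj {f : M →ₗ[A] M'} {g : M' →ₗ[A] M''} (h : SES f g) (X : Type u) [AddCommGroup X]
    [Module A X] (j : ℕ) (hj : ∀ i, i < j → Subsingleton (EX A i X M'')) :
    Function.Injective (exPost j X f) := by
  rw [injective_iff_map_eq_zero]
  intro x hx
  cases j with
  | zero =>
    have h1 := exHom_post f x
    rw [hx, map_zero] at h1
    apply (exHom X M).injective
    rw [map_zero]
    ext m
    apply h.inj
    rw [LinearMap.zero_apply, map_zero]
    exact (LinearMap.congr_fun h1 m).symm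
  | succ j =>
    obtain ⟨δ, e1, e2⟩ := ex_les' X h.inj h.surj h.exact j
    obtain ⟨y, rfl⟩ := (e2 x).1 hx
    have := hj j (Nat.lt_succ_self j)
    rw [Subsingleton.elim y 0, map_zero]

/-- injectivity of pre-composition -/
lemma exPre_inj {f : M →ₗ[A] M'} {g : M' →ₗ[A] M''} (h : SES f g) (X : Type u) [AddCommGroup X]
    [Module A X] (j : ℕ) (hj : ∀ i, i < j → Subsingleton (EX A i M X)) :
    Function.Injective (exPre j X g) := by
  rw [injective_iff_map_eq_zero]
  intro x hx
  cases j with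
  | zero =>
    have h1 := exHom_pre g x
    rw [hx, map_zero] at h1
    apply (exHom M'' X).injective
    rw [map_zero]
    ext m
    obtain ⟨m, rfl⟩ := h.surj m
    exact (LinearMap.congr_fun h1 m).symm
  | succ j =>
    obtain ⟨δ, e1, e2⟩ := ex_les X h.inj h.surj h.exact j
    obtain ⟨y, rfl⟩ := (e2 x).1 hx
    have := hj j (Nat.lt_succ_self j)
    rw [Subsingleton.elim y 0, map_zero]

/-- bilinear postcomposition -/
noncomputable def exB (j : ℕ) (X M N : Type u) [AddCommGroup X] [Module A X] [AddCommGroup M]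
    [Module A M] [AddCommGroup N] [Module A N] :
    (M →ₗ[A] N) →ₗ[A] EX A j X M →ₗ[A] EX A j X N :=
  LinearMap.mk₂ A (fun f x => exPost j X f x) (fun f g x => exPost_add j f g x)
    (fun r f x => exPost_smul j r f x) (fun _ x y => map_add _ x y) (fun r _ x => map_smul _ r x)

lemma exB_apply (j : ℕ) (X : Type u) [AddCommGroup X] [Module A X] (f : M →ₗ[A] N)
    (x : EX A j X M) : exB j X M N f x = exPost j X f x := rfl

lemma id_eq_sum (a : ℕ) : (LinearMap.id : (Fin a → M) →ₗ[A] (Fin a → M)) =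
    ∑ k, LinearMap.single A (fun _ => M) k ∘ₗ LinearMap.proj k := by
  ext k x l
  simp [Pi.single_apply]

lemma ex_pi_decomp (j : ℕ) (X : Type u) [AddCommGroup X] [Module A X] (a : ℕ)
    (x : EX A j X (Fin a → M)) :
    x = ∑ k, exPost j X (LinearMap.single A (fun _ => M) k)
      (exPost j X (LinearMap.proj k : (Fin a → M) →ₗ[A] M) x) := by
  have h : exB j X (Fin a → M) (Fin a → M) LinearMap.id x = x := exPost_id j x
  rw [id_eq_sum, map_sum, LinearMap.sum_apply] at h
  refine h.symm.trans (Finset.sum_congr rfl fun k _ => ?_)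
  rw [exB_apply, exPost_comp]

lemma ex_pi_van (j : ℕ) (X : Type u) [AddCommGroup X] [Module A X] (a : ℕ)
    (h : Subsingleton (EX A j X M)) : Subsingleton (EX A j X (Fin a → M)) := by
  refine subsingleton_of_forall_eq 0 fun x => ?_
  rw [ex_pi_decomp j X a x]
  refine Finset.sum_eq_zero fun k _ => ?_
  rw [Subsingleton.elim (exPost j X _ x) 0, map_zero]

lemma ex_pi_van_left (j : ℕ) (X : Type u) [AddCommGroup X] [Module A X] (a : ℕ)
    (h : Subsingleton (EX A j M X)) : Subsingleton (EX A j (Fin a → M) X) := by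
  induction a with
  | zero =>
    refine subsingleton_of_forall_eq 0 fun x => ?_
    rw [← exPre_id j x, show (LinearMap.id : (Fin 0 → M) →ₗ[A] (Fin 0 → M)) = 0 from
      LinearMap.ext fun _ => Subsingleton.elim _ _, exPre_zero]
  | succ a ih =>
    refine (exPreEquiv j X (Fin.consLinearEquiv A (fun _ : Fin (a+1) => M)).symm).toEquiv.subsingleton_congr.1 ?_
    exact van_mid (f := LinearMap.inl A M _) (g := LinearMap.snd A M (Fin a → M))
      LinearMap.inl_injective LinearMap.snd_surjective Function.Exact.inl_snd h ih

variable {K : Type u} [AddCommGroup K] [Module A K]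

lemma hom_pi_K (hK : IsSemidualizing A K) (a : ℕ) (g : (Fin a → K) →ₗ[A] K) :
    ∃ r : Fin a → A, g = ∑ k, r k • (LinearMap.proj k : (Fin a → K) →ₗ[A] K) := by
  choose r hr using fun k => hK.2.1.2 (g ∘ₗ LinearMap.single A (fun _ => K) k)
  refine ⟨r, ?_⟩
  ext k x
  have := LinearMap.congr_fun (hr k) x
  simp only [LinearMap.lsmul_apply, LinearMap.coe_comp, Function.comp_apply] at this
  refine this.symm.trans ?_
  simp [Pi.single_apply]

variable [IsNoetherianRing A]

lemma gk_cores (hK : IsSemidualizing A K) (h : IsGKDimZero A K M) :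
    ∃ (a : ℕ) (Y : Type u) (_ : AddCommGroup Y) (_ : Module A Y) (i : M →ₗ[A] (Fin a → K))
      (p : (Fin a → K) →ₗ[A] Y), SES i p ∧ IsGKDimZero A K Y := by
  have := hK.1
  have := h.1
  have hd := gk_dual h
  obtain ⟨a, L, _, _, i, p, hs⟩ := exists_free (A := A) (M →ₗ[A] K)
  have hF : IsGKDimZero A K (Fin a → A) := gk_pow (gk_self hK) _
  have hL := gk_left hs.inj hs.surj hs.exact hF hd
  obtain ⟨d1, d2, d3⟩ := dual_ses hs.inj hs.surj hs.exact (gk_ev hd 0)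
  let e : (Fin a → K) ≃ₗ[A] ((Fin a → A) →ₗ[A] K) := (LinearMap.lsum A (fun _ : Fin a => A) A).symm.symm
    |> fun e => (LinearEquiv.piCongrRight (fun _ => (LinearMap.ringLmapEquivSelf A A K).symm)) ≪≫ₗ e
  let ev : M ≃ₗ[A] _ := LinearEquiv.ofBijective _ (gk_bij h)
  refine ⟨a, L →ₗ[A] K, inferInstance, inferInstance,
    e.symm.toLinearMap ∘ₗ p.lcomp A K ∘ₗ ev.toLinearMap, i.lcomp A K ∘ₗ e.toLinearMap,
    ⟨?_, ?_, ?_⟩, gk_dual hL⟩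
  · exact e.symm.injective.comp (d1.comp ev.injective)
  · exact d2.comp e.surjective
  · intro x
    refine (d3 (e x)).trans ⟨?_, ?_⟩
    · rintro ⟨y, hy⟩
      obtain ⟨m, rfl⟩ := ev.surjective y
      refine ⟨m, ?_⟩
      rw [LinearMap.comp_apply, LinearMap.comp_apply]
      exact e.symm_apply_eq.2 hy
    · rintro ⟨m, rfl⟩
      exact ⟨ev m, (e.apply_symm_apply _).symm⟩

lemma gk_cograde (hK : IsSemidualizing A K) (X : Type u) [AddCommGroup X] [Module A X] (n : ℕ)
    (hX : ∀ i < n, Subsingleton (EX A i X K)) (h : IsGKDimZero A K M) (i : ℕ) (hi : i < n) :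
    Subsingleton (EX A i X M) := by
  induction i using Nat.strong_induction_on generalizing M with
  | _ i ih =>
    obtain ⟨a, Y, _, _, j, p, hs, hY⟩ := gk_cores hK h
    have h1 := exPost_inj hs X i (fun l hl => ih l hl hY (hl.trans hi))
    have := ex_pi_van i X a (hX i hi)
    exact h1.subsingleton

lemma gk_nat_inj (hK : IsSemidualizing A K) (X : Type u) [AddCommGroup X] [Module A X] (n : ℕ)
    (hX : ∀ i < n, Subsingleton (EX A i X K)) (h : IsGKDimZero A K M) :
    Function.Injective (exB (A := A) n X M K).flip := by
  rw [injective_iff_map_eq_zero]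
  intro x hx
  obtain ⟨a, Y, _, _, j, p, hs, hY⟩ := gk_cores hK h
  refine exPost_inj hs X n (fun l hl => gk_cograde hK X n hX hY l hl) ?_
  rw [map_zero, ex_pi_decomp n X a (exPost n X j x)]
  refine Finset.sum_eq_zero fun k _ => ?_
  have := LinearMap.congr_fun hx (LinearMap.proj k ∘ₗ j)
  rw [LinearMap.flip_apply, exB_apply, exPost_comp] at this
  rw [this, LinearMap.zero_apply, map_zero]

lemma gk_nat_surj (hK : IsSemidualizing A K) (X : Type u) [AddCommGroup X] [Module A X] (n : ℕ)
    (hX : ∀ i < n, Subsingleton (EX A i X K)) (h : IsGKDimZero A K M) :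
    Function.Surjective (exB (A := A) n X M K).flip := by
  intro φ
  obtain ⟨a, Y, _, _, ι, p, hs, hY⟩ := gk_cores hK h
  let fk : Fin a → (M →ₗ[A] K) := fun k => LinearMap.proj k ∘ₗ ι
  let ξ : EX A n X (Fin a → K) := ∑ k, exPost n X (LinearMap.single A (fun _ => K) k) (φ (fk k))
  have hξ : ∀ l, exB n X _ K (LinearMap.proj l) ξ = φ (fk l) := by
    intro l
    rw [map_sum, Finset.sum_eq_single l]
    · rw [exB_apply, ← exPost_comp]
      have : (LinearMap.proj l ∘ₗ LinearMap.single A (fun _ => K) l : K →ₗ[A] K) = LinearMap.id := by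
        ext x
        simp
      rw [this, exPost_id]
    · intro k _ hk
      rw [exB_apply, ← exPost_comp]
      have : (LinearMap.proj l ∘ₗ LinearMap.single A (fun _ => K) k : K →ₗ[A] K) = 0 := by
        ext x
        simp [Pi.single_apply, hk.symm]
      rw [this, exPost_zero]
    · simp
  have key : ∀ g : (Fin a → K) →ₗ[A] K, exB n X _ K g ξ = φ (g ∘ₗ ι) := by
    intro g
    clear_value ξ
    obtain ⟨r, rfl⟩ := hom_pi_K hK a g
    rw [map_sum, LinearMap.sum_apply]
    have : (∑ k, r k • (LinearMap.proj k : (Fin a → K) →ₗ[A] K)) ∘ₗ ι = ∑ k, r k • fk k := by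
      ext m
      simp [fk]
    rw [this, map_sum]
    refine Finset.sum_congr rfl fun k _ => ?_
    rw [map_smul, LinearMap.smul_apply, hξ, map_smul]
  have hz : exPost n X p ξ = 0 := by
    apply gk_nat_inj hK X n hX hY
    rw [map_zero]
    ext g
    rw [LinearMap.flip_apply, exB_apply, ← exPost_comp]
    refine (key (g ∘ₗ p)).trans ?_
    rw [LinearMap.comp_assoc, hs.exact.linearMap_comp_eq_zero, LinearMap.comp_zero, map_zero]
    rfl
  obtain ⟨η, hη⟩ := (ex_mid' X hs.inj hs.surj hs.exact n ξ).1 hz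
  refine ⟨η, ?_⟩
  ext f
  obtain ⟨g, rfl⟩ := dual_surj hs.inj hs.surj hs.exact K (gk_ev hY 0) f
  rw [LinearMap.flip_apply, exB_apply]
  refine (exPost_comp n ι g η).trans ?_
  rw [hη]
  exact key g

lemma sd_hom_ne (hK : IsSemidualizing A K) (V : Type u) [AddCommGroup V] [Module A V]
    (h : Subsingleton (K →ₗ[A] V)) : Subsingleton V := by
  have := hK.1
  refine subsingleton_of_forall_eq 0 fun v => ?_
  let W := Submodule.span A {v}
  have h1 : Subsingleton (K →ₗ[A] W) := by
    refine subsingleton_of_forall_eq 0 fun f => ?_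
    ext x
    exact LinearMap.congr_fun (Subsingleton.elim (W.subtype ∘ₗ f) 0) x
  obtain ⟨r, hr, hr'⟩ := IsSMulRegular.subsingleton_linearMap_iff.1 h1
  have : r = 0 := by
    apply hK.2.1.1
    ext x
    simpa using Module.mem_annihilator.1 hr x
  subst this
  have := @hr' ⟨v, Submodule.mem_span_singleton_self v⟩ 0 (by simp)
  exact congrArg Subtype.val this

lemma lemA1 (hK : IsSemidualizing A K) (X : Type u) [AddCommGroup X] [Module A X] (n : ℕ)
    (hX : ∀ i < n, Subsingleton (EX A i X K)) (i : ℕ) (hi : i < n) : Subsingleton (EX A i X A) :=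
  gk_cograde hK X n hX (gk_self hK) i hi

lemma lemA2 (hK : IsSemidualizing A K) (X : Type u) [AddCommGroup X] [Module A X] (n : ℕ)
    (hX : ∀ i < n, Subsingleton (EX A i X A)) (i : ℕ) (hi : i < n) : Subsingleton (EX A i X K) := by
  induction i using Nat.strong_induction_on with
  | _ i ih =>
    have h1 := gk_nat_surj hK X i (fun l hl => ih l hl (hl.trans hi)) (gk_self hK)
    have := hX i hi
    have h2 : Subsingleton ((A →ₗ[A] K) →ₗ[A] EX A i X K) := h1.subsingleton
    refine sd_hom_ne hK _ ?_
    refine subsingleton_of_forall_eq 0 fun f => ?_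
    have := Subsingleton.elim (f ∘ₗ (LinearMap.ringLmapEquivSelf A A K).toLinearMap) 0
    ext x
    obtain ⟨y, rfl⟩ := (LinearMap.ringLmapEquivSelf A A K).surjective x
    exact LinearMap.congr_fun this y

omit [IsNoetherianRing A] in
lemma quot_cover (c : Ideal A) (N : Type u) [AddCommGroup N] [Module A N] [Module.Finite A N]
    (hN : c ≤ Module.annihilator A N) :
    ∃ (a : ℕ) (p : (Fin a → A ⧸ c) →ₗ[A] N), Function.Surjective p := by
  obtain ⟨a, p, hp⟩ := Module.Finite.exists_fin' A N
  let x : Fin a → N := fun k => p (Pi.single k 1)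
  let q : Fin a → (A ⧸ c →ₗ[A] N) := fun k => Submodule.liftQ c (LinearMap.toSpanSingleton A N (x k))
    (fun r hr => by simpa using Module.mem_annihilator.1 (hN hr) (x k))
  refine ⟨a, ∑ k, q k ∘ₗ LinearMap.proj k, fun y => ?_⟩
  obtain ⟨w, rfl⟩ := hp y
  refine ⟨fun k => Submodule.Quotient.mk (w k), ?_⟩
  rw [← LinearMap.comp_id p, id_eq_sum]
  simp only [LinearMap.sum_apply, LinearMap.comp_apply, LinearMap.proj_apply, map_sum]
  refine Finset.sum_congr rfl fun k _ => ?_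
  have : (LinearMap.single A (fun _ => A) k) (w k) = w k • Pi.single k (1 : A) := by
    ext l
    simp [Pi.single_apply]
  rw [this, map_smul]
  rfl

lemma lemA3 (c : Ideal A) (n : ℕ) (hX : ∀ i < n, Subsingleton (EX A i (A ⧸ c) K))
    (N : Type u) [AddCommGroup N] [Module A N] [Module.Finite A N]
    (hN : c ≤ Module.annihilator A N) (i : ℕ) (hi : i < n) : Subsingleton (EX A i N K) := by
  induction i using Nat.strong_induction_on generalizing N with
  | _ i ih =>
    obtain ⟨a, p, hp⟩ := quot_cover c N hN
    have hs := SES.ker p hp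
    have h1 : c ≤ Module.annihilator A (LinearMap.ker p) := by
      intro r hr
      rw [Module.mem_annihilator]
      intro x
      apply hs.inj
      rw [map_smul, map_zero]
      ext k
      have : r ∈ Module.annihilator A (A ⧸ c) := by rwa [Ideal.annihilator_quotient]
      exact Module.mem_annihilator.1 this _
    have := exPre_inj hs K i (fun l hl => ih l hl _ h1 (hl.trans hi))
    have := ex_pi_van_left i K a (hX i hi)
    exact (‹Function.Injective _›).subsingleton

end LK5

section LK6

variable {A : Type u} [CommRing A] [IsNoetherianRing A] {M M' M'' N N' N'' : Type u}
  [AddCommGroup M] [Module A M] [AddCommGroup M'] [Module A M'] [AddCommGroup M''] [Module A M'']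
  [AddCommGroup N] [Module A N] [AddCommGroup N'] [Module A N'] [AddCommGroup N''] [Module A N'']
  {K : Type u} [AddCommGroup K] [Module A K]

omit [IsNoetherianRing A] in
lemma ses_range_lcomp {i : M →ₗ[A] M'} {p : M' →ₗ[A] M''} (h : SES i p) :
    SES (p.lcomp A K) (i.lcomp A K).rangeRestrict := by
  refine ⟨LinearMap.lcomp_injective_of_surjective p h.surj, LinearMap.surjective_rangeRestrict _, ?_⟩
  intro x
  refine Iff.trans ?_ (LinearMap.exact_lcomp_of_exact_of_surjective K h.exact h.surj x)
  constructor
  · intro hx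
    exact congrArg Subtype.val hx
  · intro hx
    exact Subtype.ext hx

omit [IsNoetherianRing A] in
/-- the sequence C, Y-dual, Ext one -/
lemma ses_ext_one {i : M →ₗ[A] M'} {p : M' →ₗ[A] M''} (h : SES i p)
    (hF : Subsingleton (EX A 1 M' K)) :
    ∃ δ : (M →ₗ[A] K) →ₗ[A] EX A 1 M'' K, Function.Surjective δ ∧
      Function.Exact (i.lcomp A K) δ := by
  obtain ⟨δ, e1, e2⟩ := dual_les h.inj h.surj h.exact K
  exact ⟨δ, fun x => (e2 x).1 (Subsingleton.elim _ _), e1⟩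

lemma lemQ (hK : IsSemidualizing A K) (n : ℕ) : ∀ (Y F X : Type u) [AddCommGroup Y] [Module A Y]
    [AddCommGroup F] [Module A F] [AddCommGroup X] [Module A X] (i : Y →ₗ[A] F) (p : F →ₗ[A] X)
    (_ : SES i p) (_ : IsGKDimZero A K F) (_ : GLE (A := A) K n Y)
    (_ : ∀ j < n, Subsingleton (EX A (j+1) X K)),
    (∀ j, GLE (A := A) K j (LinearMap.range (i.lcomp A K)) →
      GLE (A := A) K (n+1+j) (EX A (n+1) X K)) ∧
    (∀ j, Nonempty (EX A (n+1+(j+1)) (EX A (n+1) X K) K ≃ₗ[A]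
      EX A (j+1) (LinearMap.range (i.lcomp A K)) K)) := by
  have := hK.1
  induction n with
  | zero =>
    intro Y F X _ _ _ _ _ _ i p h hF hY _
    obtain ⟨δ, hδ, hδ'⟩ := ses_ext_one h (gk_ev hF 0)
    have hY' := gk_dual (gl_zero.1 hY)
    have hs : SES (LinearMap.range (i.lcomp A K)).subtype δ := by
      refine ⟨Submodule.subtype_injective _, hδ, ?_⟩
      intro x
      refine (hδ' x).trans ?_
      constructor
      · rintro ⟨y, rfl⟩
        exact ⟨⟨_, y, rfl⟩, rfl⟩
      · rintro ⟨⟨_, y, rfl⟩, rfl⟩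
        exact ⟨y, rfl⟩
    refine ⟨fun j hj => ?_, fun j => ?_⟩
    · rw [show 0 + 1 + j = j + 1 by omega]
      exact gl_right hK hs hj (gl_of_gk hY')
    · obtain ⟨e⟩ := ex_shift K hs (j+1) (gk_ev hY' j) (gk_ev hY' (j+1))
      rw [show 0 + 1 + (j + 1) = j + 1 + 1 by omega]
      exact ⟨e.symm⟩
  | succ n ih =>
    intro Y F X _ _ _ _ _ _ i p h hF hY hX
    obtain ⟨Y', _, _, F', _, _, i', p', h', hF', hY'⟩ := gl_cases hY
    have hYv : ∀ j < n, Subsingleton (EX A (j+1) Y K) := fun j hj =>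
      van_left h.inj h.surj h.exact (gk_ev hF j) (hX (j+1) (by omega))
    obtain ⟨q1, q2⟩ := ih Y' F' Y i' p' h' hF' hY' hYv
    obtain ⟨e⟩ := ex_shift K h (n+1) (gk_ev hF n) (gk_ev hF (n+1))
    have hs := dual_surj h.inj h.surj h.exact K (hX 0 (by omega))
    have e' : LinearMap.range (i.lcomp A K) ≃ₗ[A] (Y →ₗ[A] K) :=
      LinearEquiv.ofEq _ _ (LinearMap.range_eq_top.2 hs) ≪≫ₗ Submodule.topEquiv
    have hC := ses_range_lcomp (K := K) h'
    have hFd := gk_dual hF'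
    refine ⟨fun j hj => ?_, fun j => ?_⟩
    · have := q1 (j+1) (gl_right hK hC (gl_equiv e' hj) (gl_of_gk hFd))
      rw [show n + 1 + 1 + j = n + 1 + (j + 1) by omega]
      exact gl_equiv e this
    · obtain ⟨e1⟩ := q2 (j+1)
      obtain ⟨e2⟩ := ex_shift K hC (j+1) (gk_ev hFd j) (gk_ev hFd (j+1))
      rw [show n + 1 + 1 + (j + 1) = n + 1 + (j + 1 + 1) by omega]
      exact ⟨(exPreEquiv _ K e) ≪≫ₗ e1 ≪≫ₗ e2.symm ≪≫ₗ exPreEquiv _ K e'⟩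

omit [IsNoetherianRing A] in
lemma sub_hom_of_ex0 (h : Subsingleton (EX A 0 M K)) : Subsingleton (M →ₗ[A] K) :=
  (exHom M K).toEquiv.subsingleton_congr.1 h

omit [IsNoetherianRing A] in
lemma exists_equiv_of_surj {a : M →ₗ[A] N} {b : M →ₗ[A] N'} (ha : Function.Surjective a)
    (hb : Function.Surjective b) (h : ∀ x, a x = 0 ↔ b x = 0) : Nonempty (N ≃ₗ[A] N') := by
  have : LinearMap.ker a = LinearMap.ker b := by
    ext x
    simp [h x]
  exact ⟨(a.quotKerEquivOfSurjective ha).symm ≪≫ₗ Submodule.quotEquivOfEq _ _ this ≪≫ₗ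
    b.quotKerEquivOfSurjective hb⟩

lemma lemP (hK : IsSemidualizing A K) (n : ℕ) (hX : GLE (A := A) K n M)
    (hv : ∀ i < n, Subsingleton (EX A i M K)) :
    GLE (A := A) K n (EX A n M K) ∧ Nonempty (EX A n (EX A n M K) K ≃ₗ[A] M) := by
  have := hK.1
  cases n with
  | zero =>
    have hM := gl_zero.1 hX
    refine ⟨gl_equiv (exHom M K).symm (gk_dual hM), ⟨?_⟩⟩
    exact exPreEquiv 0 K (exHom M K).symm ≪≫ₗ exHom _ K ≪≫ₗ
      (LinearEquiv.ofBijective _ (gk_bij hM)).symm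
  | succ n =>
    obtain ⟨Y, _, _, F, _, _, i, p, h, hF, hY⟩ := gl_cases hX
    have h0 := sub_hom_of_ex0 (hv 0 (by omega))
    have hφ : Function.Injective (i.lcomp A K) := by
      rw [injective_iff_map_eq_zero]
      intro x hx
      obtain ⟨y, rfl⟩ := (LinearMap.exact_lcomp_of_exact_of_surjective K h.exact h.surj x).1 hx
      rw [Subsingleton.elim y 0, map_zero]
    have hFd := gk_dual hF
    refine ⟨?_, ?_⟩
    · exact (lemQ hK n Y F M i p h hF hY (fun j hj => hv (j+1) (by omega))).1 0
        (gl_zero.2 (gk_equiv (LinearEquiv.ofInjective _ hφ) hFd))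
    · cases n with
      | zero =>
        obtain ⟨δ, hδ, hδ'⟩ := ses_ext_one h (gk_ev hF 0)
        have hY' := gk_dual (gl_zero.1 hY)
        have hs : SES (i.lcomp A K) δ := ⟨hφ, hδ, hδ'⟩
        obtain ⟨γ, g1, g2⟩ := ses_ext_one hs (gk_ev hY' 0)
        refine exists_equiv_of_surj (M := F) (a := γ ∘ₗ evalK A K F) (b := p)
          (g1.comp (gk_bij hF).2) h.surj (fun x => ?_)
        refine (g2 _).trans (Iff.trans ?_ (h.exact x).symm)
        constructor
        · rintro ⟨z, hz⟩
          obtain ⟨y, rfl⟩ := (gk_bij (gl_zero.1 hY)).2 z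
          rw [evalK_nat] at hz
          exact ⟨y, (gk_bij hF).1 hz⟩
        · rintro ⟨y, rfl⟩
          exact ⟨evalK A K Y y, rfl⟩
      | succ n =>
        obtain ⟨Y', _, _, F', _, _, i', p', h', hF', hY'⟩ := gl_cases hY
        have hYv : ∀ j < n, Subsingleton (EX A (j+1) Y K) := fun j hj =>
          van_left h.inj h.surj h.exact (gk_ev hF j) (hv (j+1+1) (by omega))
        obtain ⟨-, q2⟩ := lemQ hK n Y' F' Y i' p' h' hF' hY' hYv
        obtain ⟨e⟩ := ex_shift K h (n+1) (gk_ev hF n) (gk_ev hF (n+1))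
        obtain ⟨e1⟩ := q2 0
        have hs := dual_surj h.inj h.surj h.exact K (hv 1 (by omega))
        have hC := ses_range_lcomp (K := K) h'
        obtain ⟨γ, g1, g2⟩ := ses_ext_one hC (gk_ev (gk_dual hF') 0)
        have hψi : Function.Injective ((i.lcomp A K).lcomp A K) :=
          LinearMap.lcomp_injective_of_surjective (S := A) (N := K) _ hs
        have hψs : Function.Surjective ((i.lcomp A K).lcomp A K) := by
          intro z
          refine ⟨z ∘ₗ (LinearEquiv.ofBijective _ ⟨hφ, hs⟩).symm.toLinearMap, ?_⟩
          ext w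
          change z ((LinearEquiv.ofBijective _ ⟨hφ, hs⟩).symm (LinearEquiv.ofBijective _ ⟨hφ, hs⟩ w)) = _
          rw [LinearEquiv.symm_apply_apply]
        let ev : F ≃ₗ[A] _ := LinearEquiv.ofBijective _ (gk_bij hF)
        have key : Nonempty (EX A 1 (LinearMap.range (i'.lcomp A K)) K ≃ₗ[A] M) := by
          refine exists_equiv_of_surj (a := γ)
            (b := p ∘ₗ ev.symm.toLinearMap ∘ₗ (i.lcomp A K).lcomp A K) g1
            (h.surj.comp (ev.symm.surjective.comp hψs)) (fun z => ?_)
          refine (g2 z).trans (Iff.trans ?_ (h.exact _).symm)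
          constructor
          · rintro ⟨w, rfl⟩
            obtain ⟨w, rfl⟩ := (gk_bij hF').2 w
            refine ⟨p' w, ?_⟩
            exact (ev.symm_apply_eq.2 rfl).symm
          · rintro ⟨y, hy⟩
            obtain ⟨w, rfl⟩ := h'.surj y
            refine ⟨evalK A K F' w, ?_⟩
            apply hψi
            exact ev.symm_apply_eq.1 hy.symm |>.symm
        obtain ⟨e3⟩ := key
        exact ⟨exPreEquiv _ K e ≪≫ₗ e1 ≪≫ₗ e3⟩

end LK6

section LK7

variable {R : Type u} [CommRing R]

/-- presentation data for one half of a link -/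
structure LinkD (c : Ideal R) (M N : Type u) [AddCommGroup M] [Module R M] [AddCommGroup N]
    [Module R N] where
  P0 : ModuleCat.{u} R
  P1 : ModuleCat.{u} R
  d : P1 →ₗ[R] P0
  ε : P0 →ₗ[R] M
  surj : Function.Surjective ε
  exact : Function.Exact d ε
  a : ℕ
  b : ℕ
  e0 : P0 ≃ₗ[R] (Fin a → R ⧸ c)
  e1 : P1 ≃ₗ[R] (Fin b → R ⧸ c)
  eN : N ≃ₗ[R] LinearMap.range (d.lcomp R (R ⧸ c))
  hz : Subsingleton M → Subsingleton P0

lemma linkD_of {c : Ideal R} {M N : Type u} [AddCommGroup M] [Module R M] [AddCommGroup N]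
    [Module R N] [Module (R ⧸ c) M] [IsScalarTower R (R ⧸ c) M] [Module (R ⧸ c) N]
    [IsScalarTower R (R ⧸ c) N] [IsLocalRing R] (hc : c ≠ ⊤) (F : MinRes (R ⧸ c) M)
    (e : F.lambdaMod ≃ₗ[R ⧸ c] N) : Nonempty (LinkD c M N) := by
  letI i0 : Module R (F.P 0) := Module.compHom (F.P 0) (algebraMap R (R ⧸ c))
  letI i1 : Module R (F.P 1) := Module.compHom (F.P 1) (algebraMap R (R ⧸ c))
  haveI t0 : IsScalarTower R (R ⧸ c) (F.P 0) := ⟨fun x y z => by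
    rw [Algebra.smul_def, mul_smul]; rfl⟩
  haveI t1 : IsScalarTower R (R ⧸ c) (F.P 1) := ⟨fun x y z => by
    rw [Algebra.smul_def, mul_smul]; rfl⟩
  haveI : Nontrivial (R ⧸ c) := Ideal.Quotient.nontrivial_iff.2 hc
  haveI : IsLocalRing (R ⧸ c) :=
    IsLocalRing.of_surjective' (Ideal.Quotient.mk c) Ideal.Quotient.mk_surjective
  have hfree : ∀ i, ∃ a : ℕ, Nonempty (F.P i ≃ₗ[R ⧸ c] (Fin a → R ⧸ c)) := by
    intro i
    have := F.projective i
    have := F.finite i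
    have : Module.Free (R ⧸ c) (F.P i) := Module.free_of_flat_of_isLocalRing
    exact ⟨_, ⟨(Module.finBasis (R ⧸ c) (F.P i)).equivFun⟩⟩
  obtain ⟨a, ⟨e0⟩⟩ := hfree 0
  obtain ⟨b, ⟨e1⟩⟩ := hfree 1
  have hsur : Function.Surjective (algebraMap R (R ⧸ c)) := Ideal.Quotient.mk_surjective
  let r : ∀ (X : Type u) [AddCommGroup X] [Module R X] [Module (R ⧸ c) X] [IsScalarTower R (R ⧸ c) X],
      Module.Dual (R ⧸ c) X ≃ₗ[R] (X →ₗ[R] R ⧸ c) := fun X _ _ _ _ =>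
    { toFun := fun f => f.restrictScalars R
      map_add' := fun _ _ => rfl
      map_smul' := fun _ _ => rfl
      invFun := fun f => LinearMap.extendScalarsOfSurjective hsur f
      left_inv := fun f => by ext; rfl
      right_inv := fun f => by ext; rfl }
  let eL : (LinearMap.range ((F.d 0).dualMap)).restrictScalars R ≃ₗ[R]
      LinearMap.range (((F.d 0).restrictScalars R).lcomp R (R ⧸ c)) := by
    refine (r (F.P 1)).submoduleMap _ ≪≫ₗ LinearEquiv.ofEq _ _ ?_
    ext x
    constructor
    · rintro ⟨_, ⟨y, rfl⟩, rfl⟩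
      exact ⟨r _ y, rfl⟩
    · rintro ⟨y, rfl⟩
      obtain ⟨y, rfl⟩ := (r (F.P 0)).surjective y
      exact ⟨_, ⟨y, rfl⟩, rfl⟩
  let eL' : N ≃ₗ[R] (LinearMap.range ((F.d 0).dualMap)).restrictScalars R :=
    { toFun := fun x => e.symm x
      map_add' := fun x y => map_add e.symm x y
      map_smul' := fun s x => by
        have h1 : s • x = (algebraMap R (R ⧸ c) s) • x := (algebraMap_smul (R ⧸ c) s x).symm
        refine (congrArg e.symm h1).trans ((map_smul e.symm (algebraMap R (R ⧸ c) s) x).trans ?_)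
        let y : LinearMap.range ((F.d 0).dualMap) := e.symm x
        exact algebraMap_smul (R ⧸ c) s y
      invFun := fun x => e x
      left_inv := fun x => e.apply_symm_apply x
      right_inv := fun x => e.symm_apply_apply x }
  refine ⟨{ P0 := ModuleCat.of R (F.P 0), P1 := ModuleCat.of R (F.P 1),
            d := (F.d 0).restrictScalars R, ε := F.ε.restrictScalars R, surj := F.surj,
            exact := ?_, a := a, b := b, e0 := e0.restrictScalars R, e1 := e1.restrictScalars R,
            eN := eL' ≪≫ₗ eL, hz := ?_ }⟩
  · exact fun x => (SetLike.ext_iff.1 F.exact0 x).symm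
  · intro hM
    have h1 : LinearMap.ker F.ε = ⊤ := by
      ext x
      simp only [LinearMap.mem_ker, Submodule.mem_top, iff_true]
      exact Subsingleton.elim _ _
    have h2 := F.min_eps ⊥ (by rw [h1]; simp)
    exact (Submodule.subsingleton_iff (R ⧸ c)).1 (subsingleton_of_bot_eq_top h2)

lemma linkD_of_linked {c : Ideal R} {M N : Type u} [AddCommGroup M] [Module R M] [AddCommGroup N]
    [Module R N] [IsLocalRing R] (hc : c ≠ ⊤) (h : LinkedBy R c M N) :
    Nonempty (LinkD c M N) ∧ Nonempty (LinkD c N M) := by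
  obtain ⟨hM, hN, h⟩ := h
  letI := hM.module
  letI := hN.module
  have : IsScalarTower R (R ⧸ c) M := hM.isScalarTower
  have : IsScalarTower R (R ⧸ c) N := hN.isScalarTower
  obtain ⟨F, G, ⟨e⟩, ⟨e'⟩⟩ := h
  exact ⟨linkD_of hc F e, linkD_of hc G e'⟩

end LK7

section LK8

variable {R : Type u} [CommRing R] {K : Type u} [AddCommGroup K] [Module R K]
  {M N P : Type u} [AddCommGroup M] [Module R M] [AddCommGroup N] [Module R N]
  [AddCommGroup P] [Module R P]

lemma ex_sub_left (i : ℕ) [Subsingleton M] : Subsingleton (EX R i M N) := by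
  refine subsingleton_of_forall_eq 0 fun x => ?_
  rw [← exPre_id i x, show (LinearMap.id : M →ₗ[R] M) = 0 from LinearMap.ext fun m =>
    Subsingleton.elim _ _, exPre_zero]

lemma ex_sub_right (i : ℕ) [Subsingleton N] : Subsingleton (EX R i M N) := by
  refine subsingleton_of_forall_eq 0 fun x => ?_
  rw [← exPost_id i x, show (LinearMap.id : N →ₗ[R] N) = 0 from LinearMap.ext fun m =>
    Subsingleton.elim _ _, exPost_zero]

/-- unpacked Gorenstein ideal -/
structure GorD (K : Type u) [AddCommGroup K] [Module R K] (c : Ideal R) (n : ℕ)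
    (η : EX R n (R ⧸ c) K) : Prop where
  van : ∀ i < n, Subsingleton (EX R i (R ⧸ c) K)
  vanR : ∀ i < n, Subsingleton (EX R i (R ⧸ c) R)
  gl : GLE (A := R) K n (R ⧸ c)
  span : ∀ x, ∃ r : R, x = r • η
  ann : ∀ r : R, r • η = 0 → r ∈ c
  ne : c ≠ ⊤

lemma enat_sInf {p : ℕ → Prop} {n : ℕ} (h : sInf {m : ℕ∞ | ∃ k : ℕ, m = k ∧ p k} = n) :
    p n ∧ ∀ i < n, ¬ p i := by
  have hne : {m : ℕ∞ | ∃ k : ℕ, m = k ∧ p k}.Nonempty := by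
    rw [Set.nonempty_iff_ne_empty]
    intro h0
    rw [h0, sInf_empty] at h
    exact ENat.natCast_ne_top n h.symm
  constructor
  · have := csInf_mem hne
    rw [h] at this
    obtain ⟨k, hk, hp⟩ := this
    have : n = k := by exact_mod_cast hk
    rwa [this]
  · intro i hi hp
    have h1 : sInf {m : ℕ∞ | ∃ k : ℕ, m = k ∧ p k} ≤ i := sInf_le ⟨i, rfl, hp⟩
    rw [h] at h1
    have : n ≤ i := by exact_mod_cast h1
    omega

lemma gor_of [IsNoetherianRing R] (hK : IsSemidualizing R K) {c : Ideal R}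
    (h : IsGKGorensteinIdeal R K c) : ∃ n η, GorD K c n η := by
  obtain ⟨n, h1, h2, x, hx⟩ := h
  unfold grAnn egrade at h1
  rw [Ideal.annihilator_quotient] at h1
  obtain ⟨a1, a2⟩ := enat_sInf h1
  obtain ⟨b1, b2⟩ := enat_sInf h2
  obtain ⟨e⟩ := extM_equiv (A := R) n (R ⧸ c) K
  have vR : ∀ i < n, Subsingleton (EX R i (R ⧸ c) R) := fun i hi =>
    (extM_subsingleton _ _ _).1 (not_not.1 (a2 i hi))
  have v := lemA2 hK (R ⧸ c) n vR
  have hs : ∀ y : EX R n (R ⧸ c) K, ∃ r : R, y = r • e x := by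
    intro y
    have : e.symm y ∈ Submodule.span R {x} := by rw [hx]; trivial
    obtain ⟨r, hr⟩ := Submodule.mem_span_singleton.1 this
    exact ⟨r, by rw [← map_smul, hr, LinearEquiv.apply_symm_apply]⟩
  refine ⟨n, e x, v, vR, b1, hs, ?_, ?_⟩
  · intro r hr
    obtain ⟨e'⟩ := (lemP hK n b1 v).2
    have hz : r • (LinearMap.id : EX R n (R ⧸ c) K →ₗ[R] _) = 0 := by
      ext y
      obtain ⟨s, rfl⟩ := hs y
      change r • s • e x = 0
      rw [smul_comm, hr, smul_zero]
    have h3 : r • e'.symm 1 = 0 := by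
      rw [← exPre_id n (e'.symm 1), ← exPre_smul, hz, exPre_zero]
    rw [← map_smul, LinearEquiv.map_eq_zero_iff] at h3
    rw [← Ideal.Quotient.eq_zero_iff_mem]
    simpa [Algebra.smul_def] using h3
  · rintro rfl
    have : Subsingleton (R ⧸ (⊤ : Ideal R)) := Ideal.Quotient.subsingleton_iff.2 rfl
    exact a1 ((extM_subsingleton _ _ _).2 (ex_sub_left n))

variable {c : Ideal R} {n : ℕ} {η : EX R n (R ⧸ c) K}

/-- comparison map -/
noncomputable def Phi (η : EX R n (R ⧸ c) K) (P : Type u) [AddCommGroup P] [Module R P] :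
    (P →ₗ[R] R ⧸ c) →ₗ[R] EX R n P K where
  toFun f := exPre n K f η
  map_add' f g := exPre_add n f g η
  map_smul' r f := exPre_smul n r f η

lemma Phi_apply (f : P →ₗ[R] R ⧸ c) : Phi η P f = exPre n K f η := rfl

lemma Phi_nat (f : P →ₗ[R] R ⧸ c) (g : N →ₗ[R] P) : Phi η N (f ∘ₗ g) = exPre n K g (Phi η P f) :=
  exPre_comp n g f η

lemma phi_base (h : GorD K c n η) : Function.Bijective (Phi η (R ⧸ c)) := by
  have key : ∀ f : (R ⧸ c) →ₗ[R] R ⧸ c, ∃ r : R, f = r • LinearMap.id := by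
    intro f
    obtain ⟨r, hr⟩ := Ideal.Quotient.mk_surjective (f 1)
    refine ⟨r, ?_⟩
    ext
    simpa [Algebra.smul_def] using hr.symm
  have k2 : ∀ r : R, Phi η (R ⧸ c) (r • LinearMap.id) = r • η := by
    intro r
    rw [map_smul, Phi_apply, exPre_id]
  constructor
  · rw [injective_iff_map_eq_zero]
    intro f hf
    obtain ⟨r, rfl⟩ := key f
    rw [k2] at hf
    have := h.ann r hf
    ext
    simpa [Algebra.smul_def] using Ideal.Quotient.eq_zero_iff_mem.2 this
  · intro x
    obtain ⟨r, rfl⟩ := h.span x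
    exact ⟨_, k2 r⟩

lemma phi_pow (h : GorD K c n η) (a : ℕ) : Function.Bijective (Phi η (Fin a → R ⧸ c)) := by
  constructor
  · rw [injective_iff_map_eq_zero]
    intro f hf
    refine LinearMap.pi_ext' fun k => ?_
    apply (phi_base h).1
    rw [Phi_nat, hf, map_zero, LinearMap.zero_comp, map_zero]
  · intro x
    choose g hg using fun k => (phi_base h).2 (exPre n K (LinearMap.single R (fun _ => R ⧸ c) k) x)
    refine ⟨∑ k, g k ∘ₗ LinearMap.proj k, ?_⟩
    rw [map_sum]
    have h1 : ∀ (s : Finset (Fin a)) (F : Fin a → ((Fin a → R ⧸ c) →ₗ[R] (Fin a → R ⧸ c))),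
        exPre n K (∑ k ∈ s, F k) x = ∑ k ∈ s, exPre n K (F k) x := by
      intro s F
      induction s using Finset.cons_induction with
      | empty => simpa using exPre_zero n x
      | cons i s hi ih => rw [Finset.sum_cons, Finset.sum_cons, exPre_add, ih]
    have h2 := exPre_id n x
    rw [id_eq_sum, h1] at h2
    refine Eq.trans (Finset.sum_congr rfl fun k _ => ?_) h2
    rw [Phi_nat, hg, ← exPre_comp]

lemma phi_bij (h : GorD K c n η) {a : ℕ} (e : P ≃ₗ[R] (Fin a → R ⧸ c)) :
    Function.Bijective (Phi η P) := by
  constructor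
  · rw [injective_iff_map_eq_zero]
    intro f hf
    have h1 : f ∘ₗ e.symm.toLinearMap = 0 := by
      apply (phi_pow h a).1
      rw [Phi_nat, hf, map_zero, map_zero]
    ext x
    simpa using LinearMap.congr_fun h1 (e x)
  · intro x
    obtain ⟨f, hf⟩ := (phi_pow h a).2 (exPre n K e.symm.toLinearMap x)
    refine ⟨f ∘ₗ e.toLinearMap, ?_⟩
    rw [Phi_nat, hf, ← exPre_comp]
    convert exPre_id n x
    ext
    simp

lemma ann_pow {a : ℕ} (e : P ≃ₗ[R] (Fin a → R ⧸ c)) : c ≤ Module.annihilator R P := by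
  intro r hr
  rw [Module.mem_annihilator]
  intro x
  apply e.injective
  rw [map_smul, map_zero]
  ext k
  obtain ⟨s, hs⟩ := Ideal.Quotient.mk_surjective (e x k)
  rw [Pi.smul_apply, ← hs, Algebra.smul_def]
  exact (map_mul (Ideal.Quotient.mk c) r s).symm.trans
    (Ideal.Quotient.eq_zero_iff_mem.2 (Ideal.mul_mem_right _ _ hr))

lemma ann_of_inj {f : M →ₗ[R] N} (hf : Function.Injective f) (h : c ≤ Module.annihilator R N) :
    c ≤ Module.annihilator R M := h.trans (LinearMap.annihilator_le_of_injective f hf)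

variable [IsNoetherianRing R]

/-- (L1) -/
lemma link_ses (h : GorD K c n η) (D : LinkD c M N) :
    ∃ q : EX R n D.P0 K →ₗ[R] N, SES (exPre n K D.ε) q := by
  have : Module.Finite R D.P0 := Module.Finite.equiv D.e0.symm
  have : Module.Finite R D.P1 := Module.Finite.equiv D.e1.symm
  let Φ := LinearEquiv.ofBijective _ (phi_bij h D.e0)
  let π : (D.P0 →ₗ[R] R ⧸ c) →ₗ[R] N :=
    D.eN.symm.toLinearMap ∘ₗ (D.d.lcomp R (R ⧸ c)).rangeRestrict
  have hker := SES.ker D.ε D.surj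
  have v1 : ∀ i < n, Subsingleton (EX R i (LinearMap.ker D.ε) K) := fun i hi =>
    lemA3 c n h.van _ (ann_of_inj hker.inj (ann_pow D.e0)) i hi
  let d' : D.P1 →ₗ[R] LinearMap.ker D.ε := D.d.codRestrict _ fun x =>
    (D.exact _).2 ⟨x, rfl⟩
  have hd' : Function.Surjective d' := fun y => by
    obtain ⟨x, hx⟩ := (D.exact _).1 y.2
    exact ⟨x, Subtype.ext hx⟩
  have hk' := SES.ker d' hd'
  have i1 := exPre_inj hk' K n fun i hi =>
    lemA3 c n h.van _ (ann_of_inj hk'.inj (ann_pow D.e1)) i hi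
  refine ⟨π ∘ₗ Φ.symm.toLinearMap, exPre_inj hker K n v1, ?_, ?_⟩
  · exact (D.eN.symm.surjective.comp (LinearMap.surjective_rangeRestrict _)).comp Φ.symm.surjective
  · intro x
    refine Iff.trans ?_ (ex_mid K hker.inj hker.surj hker.exact n x)
    obtain ⟨f, rfl⟩ := Φ.surjective x
    have e1 : D.d = (LinearMap.ker D.ε).subtype ∘ₗ d' := rfl
    have e2 : (π ∘ₗ Φ.symm.toLinearMap) (Φ f) = D.eN.symm ((D.d.lcomp R (R ⧸ c)).rangeRestrict f) := by
      change D.eN.symm ((D.d.lcomp R (R ⧸ c)).rangeRestrict (Φ.symm (Φ f))) = _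
      rw [LinearEquiv.symm_apply_apply]
    rw [e2, LinearEquiv.map_eq_zero_iff]
    have e3 : exPre n K D.d (Φ f) = Phi η D.P1 (f ∘ₗ D.d) := (Phi_nat f D.d).symm
    rw [e1, exPre_comp] at e3
    rw [← (map_eq_zero_iff _ i1), e3, (map_eq_zero_iff _ (phi_bij h D.e1).1)]
    exact Subtype.ext_iff

lemma link_B (hK : IsSemidualizing R K) (h : GorD K c n η) (D : LinkD c M N) :
    GLE (A := R) K n D.P0 ∧ GLE (A := R) K n (EX R n D.P0 K) := by
  have : Module.Finite R D.P0 := Module.Finite.equiv D.e0.symm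
  have h1 : GLE (A := R) K n D.P0 := gl_equiv D.e0.symm (gl_pow hK h.gl D.a)
  exact ⟨h1, (lemP hK n h1 fun i hi => lemA3 c n h.van _ (ann_pow D.e0) i hi).1⟩

omit [IsNoetherianRing R] in
/-- (L2) -/
lemma link_ne (D : LinkD c M N) (hN : ¬ Subsingleton N) : ∃ f : N →ₗ[R] R ⧸ c, f ≠ 0 := by
  by_contra! hf
  apply hN
  refine subsingleton_of_forall_eq 0 fun x => ?_
  rw [← D.eN.map_eq_zero_iff, Subtype.ext_iff]
  ext p
  exact LinearMap.congr_fun (hf (LinearMap.applyₗ p ∘ₗ (LinearMap.range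
    (D.d.lcomp R (R ⧸ c))).subtype ∘ₗ D.eN.toLinearMap)) x

omit [IsNoetherianRing R] in
lemma link_zero (D : LinkD c M N) (hM : Subsingleton M) : Subsingleton N := by
  have := D.hz hM
  refine subsingleton_of_forall_eq 0 fun x => ?_
  rw [← D.eN.map_eq_zero_iff, Subtype.ext_iff]
  obtain ⟨f, hf⟩ := (D.eN x).2
  rw [← hf, show f = 0 from LinearMap.ext fun y => by rw [Subsingleton.elim y 0, map_zero, map_zero],
    map_zero]
  rfl

omit [IsNoetherianRing R] in
lemma link_ann (D : LinkD c M N) : c ≤ Module.annihilator R M := by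
  intro r hr
  rw [Module.mem_annihilator]
  intro x
  obtain ⟨y, rfl⟩ := D.surj x
  rw [← map_smul, Module.mem_annihilator.1 (ann_pow D.e0 hr), map_zero]

/-- (L4) -/
lemma link_perf (hK : IsSemidualizing R K) (h : GorD K c n η) (D : LinkD c N M)
    (hN : GLE (A := R) K n N) : GLE (A := R) K n M := by
  have : Module.Finite R D.P0 := Module.Finite.equiv D.e0.symm
  obtain ⟨q, hq⟩ := link_ses h D
  have hker := SES.ker D.ε D.surj
  have hL := gl_left hK hker (link_B hK h D).1 (gl_step hN)
  have hL2 := (lemP hK n hL fun i hi => lemA3 c n h.van _ (ann_of_inj hker.inj (ann_pow D.e0)) i hi).1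
  have := gl_van hN (n+1) (Nat.lt_succ_self n)
  have hs : Function.Surjective (exPre n K (LinearMap.ker D.ε).subtype) := by
    obtain ⟨δ, e1, e2⟩ := ex_les K hker.inj hker.surj hker.exact n
    exact fun x => (e1 x).1 (Subsingleton.elim _ _)
  obtain ⟨e⟩ := exists_equiv_of_surj hs hq.surj fun x =>
    (ex_mid K hker.inj hker.surj hker.exact n x).trans (hq.exact x).symm
  exact gl_equiv e hL2

lemma gor_le [Module.Finite R M] {c₂ : Ideal R} {n₂ : ℕ} {η₂ : EX R n₂ (R ⧸ c₂) K}
    (h : GorD K c n η) (h₂ : GorD K c₂ n₂ η₂) (hM : c₂ ≤ Module.annihilator R M)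
    (f : M →ₗ[R] R ⧸ c) (hf : f ≠ 0) : n₂ ≤ n := by
  by_contra! hlt
  have h0 := lemA3 c₂ n₂ h₂.van M hM n hlt
  have hk := SES.ker f.rangeRestrict (LinearMap.surjective_rangeRestrict f)
  have i1 := exPre_inj hk K n fun i hi =>
    lemA3 c₂ n₂ h₂.van _ (ann_of_inj hk.inj hM) i (hi.trans hlt)
  apply hf
  ext x
  obtain ⟨r, hr⟩ := Ideal.Quotient.mk_surjective (f x)
  have e1 : exPre n K (LinearMap.range f).subtype η = 0 := by
    apply i1
    rw [map_zero]
    exact Subsingleton.elim _ _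
  have hr1 : ∀ z : R, r • (Ideal.Quotient.mk c z) ∈ LinearMap.range f := by
    intro z
    refine ⟨z • x, ?_⟩
    rw [map_smul, ← hr, Algebra.smul_def, Algebra.smul_def]
    exact mul_comm _ _
  have e2 : r • η = 0 := by
    let g : R ⧸ c →ₗ[R] LinearMap.range f :=
      (r • LinearMap.id : R ⧸ c →ₗ[R] R ⧸ c).codRestrict _ fun y => by
        obtain ⟨z, rfl⟩ := Ideal.Quotient.mk_surjective y
        exact hr1 z
    have e3 : (LinearMap.range f).subtype ∘ₗ g = r • LinearMap.id := rfl
    rw [← exPre_id n η, ← exPre_smul, ← e3, exPre_comp, e1, map_zero]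
  rw [← hr]
  exact Ideal.Quotient.eq_zero_iff_mem.2 (h.ann r e2)

/-- a module of small dimension with vanishing cohomology is zero -/
lemma gl_zero_of (hK : IsSemidualizing R K) (m : ℕ) (hM : GLE (A := R) K m M)
    (hv : ∀ i ≤ m, Subsingleton (EX R i M K)) : Subsingleton M := by
  induction m with
  | zero =>
    have h1 := sub_hom_of_ex0 (hv 0 le_rfl)
    have h2 := (gk_bij hM).1
    exact ⟨fun x y => h2 (LinearMap.ext fun φ => by rw [Subsingleton.elim φ 0, map_zero, map_zero])⟩
  | succ m ih =>
    exact ih (gl_down hM (hv _ le_rfl)) fun i hi => hv i (by omega)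

/-- one direction of (i), equal grades -/
lemma part_i {M₁ M₂ : Type u} [AddCommGroup M₁] [Module R M₁] [AddCommGroup M₂] [Module R M₂]
    {c₂ : Ideal R} {η₂ : EX R n (R ⧸ c₂) K} (hK : IsSemidualizing R K) (h : GorD K c n η)
    (h₂ : GorD K c₂ n η₂) (D₁ : LinkD c M₁ M) (D₁' : LinkD c M M₁) (D₂ : LinkD c₂ M M₂)
    (m : ℕ) (hm : GLE (A := R) K m M₁) : GLE (A := R) K m M₂ := by
  have := gl_finite hm
  by_cases hz : Subsingleton M₁
  · have := link_zero D₂ (link_zero D₁ hz)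
    exact gl_of_gk gk_sub
  have hmn : n ≤ m := by
    by_contra! hlt
    exact hz (gl_zero_of hK m hm fun i hi => lemA3 c n h.van _ (link_ann D₁) i (by omega))
  rcases hmn.eq_or_lt with rfl | hlt
  · exact link_perf hK h₂ D₂ (link_perf hK h D₁ hm)
  · obtain ⟨l, rfl⟩ := Nat.exists_eq_succ_of_ne_zero (by omega : m ≠ 0)
    obtain ⟨q, hq⟩ := link_ses h D₁'
    obtain ⟨q₂, hq₂⟩ := link_ses h₂ D₂
    have b1 := gl_mono (by omega : n ≤ l) (link_B hK h D₁').2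
    have b2 := gl_mono (by omega : n ≤ l + 1) (link_B hK h₂ D₂).2
    exact gl_right hK hq₂ (gl_left hK hq b1 hm) b2

end LK8

section LK9

variable {R : Type u} [CommRing R] (S : Submonoid R) {K : Type u} [AddCommGroup K] [Module R K]
  {M M' M'' N X : Type u} [AddCommGroup M] [Module R M] [AddCommGroup M'] [Module R M']
  [AddCommGroup M''] [Module R M''] [AddCommGroup N] [Module R N] [AddCommGroup X] [Module R X]

lemma ses_loc {f : M →ₗ[R] M'} {g : M' →ₗ[R] M''} (h : SES f g) :
    SES (LocalizedModule.map S f) (LocalizedModule.map S g) :=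
  ⟨LocalizedModule.map_injective S f h.inj, LocalizedModule.map_surjective S g h.surj,
    LocalizedModule.map_exact S f g h.exact⟩

/-- localized isomorphism -/
noncomputable def locEquiv (e : M ≃ₗ[R] N) :
    LocalizedModule S M ≃ₗ[Localization S] LocalizedModule S N :=
  LinearEquiv.ofBijective (LocalizedModule.map S e.toLinearMap)
    ⟨LocalizedModule.map_injective S _ e.injective, LocalizedModule.map_surjective S _ e.surjective⟩

variable [IsNoetherianRing R]

/-- Hom commutes with localization -/
noncomputable def locHom (X K : Type u) [AddCommGroup X] [Module R X] [Module.Finite R X]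
    [AddCommGroup K] [Module R K] :
    LocalizedModule S (X →ₗ[R] K) ≃ₗ[Localization S]
      (LocalizedModule S X →ₗ[Localization S] LocalizedModule S K) :=
  haveI : Module.FinitePresentation R X := Module.finitePresentation_of_finite R X
  (IsLocalizedModule.linearEquiv S (LocalizedModule.mkLinearMap S (X →ₗ[R] K))
    (LocalizedModule.map S (M := X) (N := K))).extendScalarsOfIsLocalization S (Localization S)

lemma locHom_mk [Module.Finite R X] (φ : X →ₗ[R] K) :
    locHom S X K (LocalizedModule.mk φ 1) = LocalizedModule.map S φ :=
  haveI : Module.FinitePresentation R X := Module.finitePresentation_of_finite R X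
  IsLocalizedModule.linearEquiv_apply S (LocalizedModule.mkLinearMap S (X →ₗ[R] K))
    (LocalizedModule.map S (M := X) (N := K)) φ

omit [IsNoetherianRing R] in
lemma loc_ext {T : Type u} [AddCommGroup T] [Module (Localization S) T]
    {f g : LocalizedModule S M →ₗ[Localization S] T}
    (h : ∀ m, f (LocalizedModule.mk m 1) = g (LocalizedModule.mk m 1)) : f = g := by
  ext x
  induction x using LocalizedModule.induction_on with
  | h m s =>
    have h1 : LocalizedModule.mk m s =
        (Localization.mk 1 s : Localization S) • LocalizedModule.mk m (1 : S) := by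
      rw [LocalizedModule.mk_smul_mk, one_smul, mul_one]
    rw [h1, map_smul, map_smul, h]

lemma locHom_nat [Module.Finite R M] [Module.Finite R N] (f : M →ₗ[R] N)
    (x : LocalizedModule S (N →ₗ[R] K)) :
    locHom S M K (LocalizedModule.map S (f.lcomp R K) x) =
      locHom S N K x ∘ₗ LocalizedModule.map S f := by
  have : (locHom S M K).toLinearMap ∘ₗ (LocalizedModule.map S (f.lcomp R K)) =
      ((LocalizedModule.map S f).lcomp (Localization S) (LocalizedModule S K)) ∘ₗ
        (locHom S N K).toLinearMap := by
    refine loc_ext S fun φ => ?_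
    change locHom S M K (LocalizedModule.map S (f.lcomp R K) (LocalizedModule.mk φ 1)) =
      (locHom S N K (LocalizedModule.mk φ 1)) ∘ₗ LocalizedModule.map S f
    rw [LocalizedModule.map_mk, locHom_mk, locHom_mk]
    refine loc_ext S fun m => ?_
    rw [LinearMap.comp_apply, LocalizedModule.map_mk, LocalizedModule.map_mk,
      LocalizedModule.map_mk]
    rfl
  exact LinearMap.congr_fun this x

lemma ev_loc (i : ℕ) (X : Type u) [AddCommGroup X] [Module R X] [Module.Finite R X]
    (h : EV (A := R) K X) :
    Subsingleton (EX (Localization S) (i+1) (LocalizedModule S X) (LocalizedModule S K)) := by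
  induction i generalizing X with
  | zero =>
    obtain ⟨n, L, _, _, j, p, hs⟩ := exists_free (A := R) X
    have : Module.Finite R L := Module.Finite.of_injective j hs.inj
    have h1 := dual_surj hs.inj hs.surj hs.exact K (h 0)
    have hl := ses_loc S hs
    refine dual_ext1 hl.inj hl.surj hl.exact _ (ex_projective 0 _ _) ?_
    intro φ
    obtain ⟨y, rfl⟩ := (locHom S L K).surjective φ
    obtain ⟨z, rfl⟩ := LocalizedModule.map_surjective S _ h1 y
    exact ⟨locHom S _ K z, (locHom_nat S j z).symm⟩
  | succ i ih =>
    obtain ⟨n, L, _, _, j, p, hs⟩ := exists_free (A := R) X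
    have : Module.Finite R L := Module.Finite.of_injective j hs.inj
    have hl := ses_loc S hs
    refine van_right hl.inj hl.surj hl.exact (ih L fun l => ?_) (ex_projective (i+1) _ _)
    exact van_left hs.inj hs.surj hs.exact (ex_projective l _ _) (h (l+1))

lemma gk_loc [Module.Finite R K] (h : IsGKDimZero R K X) :
    IsGKDimZero (Localization S) (LocalizedModule S K) (LocalizedModule S X) := by
  have := h.1
  let e1 : LocalizedModule S X ≃ₗ[Localization S]
      (LocalizedModule S (X →ₗ[R] K) →ₗ[Localization S] LocalizedModule S K) :=
    locEquiv S (LinearEquiv.ofBijective _ (gk_bij h)) ≪≫ₗ locHom S (X →ₗ[R] K) K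
  refine gk_pairing (N := LocalizedModule S (X →ₗ[R] K)) e1.toLinearMap e1.bijective ?_
    (fun i => ev_loc S i X (gk_ev h)) (fun i => ev_loc S i _ (gk_evd h))
  have : e1.toLinearMap.flip = (locHom S X K).toLinearMap := by
    refine loc_ext S fun φ => loc_ext S fun x => ?_
    have h1 : e1 (LocalizedModule.mk x 1) = LocalizedModule.map S (evalK R K X x) := by
      change locHom S (X →ₗ[R] K) K (LocalizedModule.map S _ (LocalizedModule.mk x 1)) = _
      rw [LocalizedModule.map_mk, locHom_mk]
      rfl
    change e1 (LocalizedModule.mk x 1) (LocalizedModule.mk φ 1) =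
      locHom S X K (LocalizedModule.mk φ 1) (LocalizedModule.mk x 1)
    rw [h1, locHom_mk, LocalizedModule.map_mk, LocalizedModule.map_mk]
    rfl
  rw [this]
  exact (locHom S X K).bijective

lemma gl_loc [Module.Finite R K] (n : ℕ) (h : GLE (A := R) K n X) :
    GLE (A := Localization S) (LocalizedModule S K) n (LocalizedModule S X) := by
  induction n generalizing X with
  | zero => exact gk_loc S h
  | succ n ih =>
    obtain ⟨Y, _, _, G, _, _, i, p, hs, h1, h2⟩ := gl_cases h
    exact gl_succ (ses_loc S hs) (gk_loc S h1) (ih h2)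

lemma sd_loc (hK : IsSemidualizing R K) :
    IsSemidualizing (Localization S) (LocalizedModule S K) := by
  have := hK.1
  refine ⟨inferInstance, ?_, (ev_iff _ _).2 fun i => ev_loc S i K (sd_ev hK)⟩
  have h1 := gk_loc S (gk_self hK)
  let e0 : LocalizedModule S R ≃ₗ[Localization S] Localization S :=
    (IsLocalizedModule.linearEquiv S (LocalizedModule.mkLinearMap S R)
      (Algebra.linearMap R (Localization S))).extendScalarsOfIsLocalization S (Localization S)
  have h2 := gk_bij (gk_equiv e0 h1)
  let e : (Localization S →ₗ[Localization S] LocalizedModule S K) ≃ₗ[Localization S]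
    LocalizedModule S K := LinearMap.ringLmapEquivSelf _ (Localization S) _
  have h3 : ∀ a : Localization S, LinearMap.lsmul (Localization S) (LocalizedModule S K) a =
      (evalK (Localization S) (LocalizedModule S K) (Localization S) a) ∘ₗ e.symm.toLinearMap := by
    intro a
    ext x
    simp [e, evalK]
  constructor
  · intro a b hab
    apply h2.1
    rw [h3, h3] at hab
    ext φ
    simpa using LinearMap.congr_fun hab (e φ)
  · intro φ
    obtain ⟨a, ha⟩ := h2.2 (φ ∘ₗ e.toLinearMap)
    refine ⟨a, ?_⟩
    rw [h3, ha]
    ext x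
    simp

/-- degree zero form of link_ses -/
lemma link_ses_zero {c : Ideal R} {η : EX R 0 (R ⧸ c) K} (h : GorD K c 0 η) (D : LinkD c M N) :
    ∃ q : (D.P0 →ₗ[R] K) →ₗ[R] N, SES (D.ε.lcomp R K) q := by
  obtain ⟨q, hq⟩ := link_ses h D
  refine ⟨q ∘ₗ (exHom D.P0 K).symm.toLinearMap,
    LinearMap.lcomp_injective_of_surjective (S := R) (N := K) _ D.surj,
    hq.surj.comp (exHom D.P0 K).symm.surjective, fun x => ?_⟩
  refine (hq.exact _).trans ⟨?_, ?_⟩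
  · rintro ⟨y, hy⟩
    refine ⟨exHom M K y, ?_⟩
    change exHom M K y ∘ₗ D.ε = x
    rw [← exHom_pre, hy]
    exact LinearEquiv.apply_symm_apply _ _
  · rintro ⟨y, rfl⟩
    refine ⟨(exHom M K).symm y, ?_⟩
    apply (exHom D.P0 K).injective
    rw [exHom_pre]
    change _ = exHom D.P0 K ((exHom D.P0 K).symm _)
    rw [LinearEquiv.apply_symm_apply, LinearEquiv.apply_symm_apply]
    rfl

lemma link_P0 (hK : IsSemidualizing R K) {c : Ideal R} {η : EX R 0 (R ⧸ c) K} (h : GorD K c 0 η)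
    (D : LinkD c M N) : IsGKDimZero R K D.P0 := (link_B hK h D).1

/-- local transfer -/
lemma link_loc (hK : IsSemidualizing R K) {c : Ideal R} {η : EX R 0 (R ⧸ c) K} (h : GorD K c 0 η)
    [Module.Finite R N] (D : LinkD c N M)
    (hN : IsGKDimZero (Localization S) (LocalizedModule S K) (LocalizedModule S N)) :
    IsGKDimZero (Localization S) (LocalizedModule S K) (LocalizedModule S M) := by
  have := hK.1
  have hP := link_P0 hK h D
  have := hP.1
  obtain ⟨q, hq⟩ := link_ses_zero h D
  have hq' := ses_loc S hq
  have hker := ses_loc S (SES.ker D.ε D.surj)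
  have hL := gk_left hker.inj hker.surj hker.exact (gk_loc S hP) hN
  obtain ⟨d1, d2, d3⟩ := dual_ses hker.inj hker.surj hker.exact (gk_ev hN 0)
  have hb : Function.Surjective (((LocalizedModule.map S (LinearMap.ker D.ε).subtype).lcomp
      (Localization S) (LocalizedModule S K)) ∘ₗ (locHom S D.P0 K).toLinearMap) :=
    d2.comp (locHom S D.P0 K).surjective
  obtain ⟨e⟩ := exists_equiv_of_surj hb hq'.surj fun x => by
    refine (d3 _).trans (Iff.trans ?_ (hq'.exact x).symm)
    constructor
    · rintro ⟨y, hy⟩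
      obtain ⟨z, rfl⟩ := (locHom S N K).surjective y
      refine ⟨z, (locHom S D.P0 K).injective ?_⟩
      rw [locHom_nat]
      exact hy
    · rintro ⟨z, rfl⟩
      exact ⟨locHom S N K z, (locHom_nat S D.ε z).symm⟩
  exact gk_equiv e (gk_dual hL)

end LK9

section LK10

variable {A : Type u} [CommRing A] [IsNoetherianRing A] [IsLocalRing A]
  {K : Type u} [AddCommGroup K] [Module A K]
  {M N X : Type u} [AddCommGroup M] [Module A M] [AddCommGroup N] [Module A N]
  [AddCommGroup X] [Module A X]

omit [IsNoetherianRing A] [IsLocalRing A] in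
lemma ex_killed (I : Ideal A) (i : ℕ) (x : EX A i (A ⧸ I) N) (r : A) (hr : r ∈ I) : r • x = 0 := by
  rw [← exPre_id i x, ← exPre_smul]
  have : r • (LinearMap.id : A ⧸ I →ₗ[A] A ⧸ I) = 0 := by
    ext
    simpa [Algebra.smul_def] using Ideal.Quotient.eq_zero_iff_mem.2 hr
  rw [this, exPre_zero]

omit [IsNoetherianRing A] in
lemma exists_map_killed [Module.Finite A N] (U : Submodule A N) (hU : U ≠ ⊤)
    (hM : ∀ r ∈ IsLocalRing.maximalIdeal A, ∀ x : M, r • x = 0) (v : M) (hv : v ≠ 0) :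
    ∃ φ : N →ₗ[A] M, φ ≠ 0 ∧ ∀ u ∈ U, φ u = 0 := by
  obtain ⟨W, hW, hUW⟩ := (eq_top_or_exists_le_coatom U).resolve_left hU
  have hs : IsSimpleModule A (N ⧸ W) := isSimpleModule_iff_isCoatom.2 hW
  obtain ⟨I, hI, ⟨e⟩⟩ := isSimpleModule_iff_quot_maximal.1 hs
  have hI := IsLocalRing.eq_maximalIdeal hI
  subst hI
  let ψ : A ⧸ IsLocalRing.maximalIdeal A →ₗ[A] M :=
    Submodule.liftQ _ (LinearMap.toSpanSingleton A M v) fun r hr => by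
      simpa using hM r hr v
  refine ⟨ψ ∘ₗ e.toLinearMap ∘ₗ W.mkQ, ?_, ?_⟩
  · intro h0
    obtain ⟨y, hy⟩ := W.mkQ_surjective (e.symm (Submodule.Quotient.mk 1))
    have := LinearMap.congr_fun h0 y
    apply hv
    rw [LinearMap.comp_apply, LinearMap.comp_apply, hy] at this
    change ψ (e (e.symm (Submodule.Quotient.mk 1))) = 0 at this
    rw [LinearEquiv.apply_symm_apply] at this
    have h3 : ψ (Submodule.Quotient.mk 1) = v := by
      change (LinearMap.toSpanSingleton A M v) 1 = v
      simp
    rw [← h3]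
    exact this
  · intro u hu
    have : W.mkQ u = 0 := by simpa using hUW hu
    rw [LinearMap.comp_apply, LinearMap.comp_apply, this, map_zero, map_zero]

/-- Auslander-Bridger type lemma -/
lemma ab_lemma (hK : IsSemidualizing A K) (d : ℕ)
    (hd : ∀ i < d, Subsingleton (EX A i (A ⧸ IsLocalRing.maximalIdeal A) A))
    (hnd : ¬ Subsingleton (EX A d (A ⧸ IsLocalRing.maximalIdeal A) A)) (n : ℕ)
    (hX : GLE (A := A) K n X)
    (hv : ∀ i < d, Subsingleton (EX A i (A ⧸ IsLocalRing.maximalIdeal A) X)) :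
    IsGKDimZero A K X := by
  have := hK.1
  have hdK := lemA2 hK _ d hd
  have hV : ¬ Subsingleton (EX A d (A ⧸ IsLocalRing.maximalIdeal A) K) := by
    intro h0
    refine hnd (lemA1 hK _ (d+1) (fun i hi => ?_) d (Nat.lt_succ_self d))
    rcases Nat.lt_succ_iff_lt_or_eq.1 hi with h | rfl
    · exact hdK i h
    · exact h0
  obtain ⟨v, hv0⟩ : ∃ v : EX A d (A ⧸ IsLocalRing.maximalIdeal A) K, v ≠ 0 := by
    by_contra! h0
    exact hV (subsingleton_of_forall_eq 0 h0)
  induction n generalizing X with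
  | zero => exact hX
  | succ n ih =>
    obtain ⟨Y, _, _, G, _, _, i, p, hs, hG, hY⟩ := gl_cases hX
    have hGv := gk_cograde hK _ d hdK hG
    have hYk : IsGKDimZero A K Y := by
      refine ih hY fun j hj => ?_
      cases j with
      | zero =>
        have := hGv 0 hj
        exact (exPost_inj hs _ 0 fun i hi => absurd hi (Nat.not_lt_zero i)).subsingleton
      | succ j => exact van_left' hs.inj hs.surj hs.exact (hGv _ hj) (hv j (by omega))
    refine gk_right hs.inj hs.surj hs.exact hYk hG
      (dual_ext1 hs.inj hs.surj hs.exact K (gk_ev hG 0) ?_)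
    rw [← LinearMap.range_eq_top]
    by_contra hU
    have := hYk.1
    obtain ⟨φ, h1, h2⟩ := exists_map_killed _ hU
      (fun r hr x => ex_killed (N := K) (IsLocalRing.maximalIdeal A) d x r hr) v hv0
    obtain ⟨ξ, hξ⟩ := gk_nat_surj hK _ d hdK hYk φ
    have hξ' : ∀ f : Y →ₗ[A] K, exPost d _ f ξ = φ f := fun f => LinearMap.congr_fun hξ f
    have e1 : exPost d _ i ξ = 0 := by
      apply gk_nat_inj hK _ d hdK hG
      rw [map_zero]
      refine LinearMap.ext fun g => ?_
      change exPost d _ g (exPost d _ i ξ) = 0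
      rw [← exPost_comp, hξ']
      exact h2 _ ⟨g, rfl⟩
    have e2 : ξ = 0 := exPost_inj hs _ d hv (by rw [e1, map_zero])
    apply h1
    rw [← hξ, e2, map_zero]

/-- the local statement -/
lemma local_step (hK : IsSemidualizing A K) {E B₁ B₂ M₁ M₂ : Type u} [AddCommGroup E] [Module A E]
    [AddCommGroup B₁] [Module A B₁] [AddCommGroup B₂] [Module A B₂] [AddCommGroup M₁] [Module A M₁]
    [AddCommGroup M₂] [Module A M₂] {i₁ : E →ₗ[A] B₁} {p₁ : B₁ →ₗ[A] M₁} {i₂ : E →ₗ[A] B₂}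
    {p₂ : B₂ →ₗ[A] M₂} (s₁ : SES i₁ p₁) (s₂ : SES i₂ p₂) (h₁ : IsGKDimZero A K B₁)
    (h₂ : IsGKDimZero A K B₂) {n : ℕ} (hn : GLE (A := A) K n M₁)
    (ht : IsGKDimZero A K M₁ → IsGKDimZero A K M₂) (k : ℕ)
    (hM₁ : ∀ i < k, (∀ j ≤ i, Subsingleton (EX A j (A ⧸ IsLocalRing.maximalIdeal A) A)) →
      Subsingleton (EX A i (A ⧸ IsLocalRing.maximalIdeal A) M₁)) :
    ∀ i < k, (∀ j ≤ i, Subsingleton (EX A j (A ⧸ IsLocalRing.maximalIdeal A) A)) →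
      Subsingleton (EX A i (A ⧸ IsLocalRing.maximalIdeal A) M₂) := by
  intro i hi hj
  have van : ∀ {X : Type u} [AddCommGroup X] [Module A X], IsGKDimZero A K X → ∀ i,
      (∀ j ≤ i, Subsingleton (EX A j (A ⧸ IsLocalRing.maximalIdeal A) A)) →
      Subsingleton (EX A i (A ⧸ IsLocalRing.maximalIdeal A) X) := by
    intro X _ _ hX i hi
    exact gk_cograde hK _ (i+1) (lemA2 hK _ (i+1) fun l hl => hi l (by omega)) hX i (by omega)
  by_cases hbig : ∀ j ≤ i + 1, Subsingleton (EX A j (A ⧸ IsLocalRing.maximalIdeal A) A)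
  · exact van_right' s₂.inj s₂.surj s₂.exact
      (van_left' s₁.inj s₁.surj s₁.exact (van h₁ _ hbig) (hM₁ i hi hj)) (van h₂ _ hj)
  · have hnd : ¬ Subsingleton (EX A (i+1) (A ⧸ IsLocalRing.maximalIdeal A) A) := by
      intro h0
      apply hbig
      intro j hji
      rcases hji.eq_or_lt with rfl | h
      · exact h0
      · exact hj j (by omega)
    refine van (ht ?_) i hj
    exact ab_lemma hK (i+1) (fun l hl => hj l (by omega)) hnd n hn fun l hl =>
      hM₁ l (by omega) fun j hjl => hj j (by omega)

omit [IsNoetherianRing A] in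
lemma stilde_loc (k : ℕ) : min (k : ℕ∞) (rdepth A) ≤ edepth A (IsLocalRing.maximalIdeal A) M ↔
    ∀ i < k, (∀ j ≤ i, Subsingleton (EX A j (A ⧸ IsLocalRing.maximalIdeal A) A)) →
      Subsingleton (EX A i (A ⧸ IsLocalRing.maximalIdeal A) M) := by
  constructor
  · intro h i hi hj
    by_contra h0
    have h1 : edepth A (IsLocalRing.maximalIdeal A) M ≤ i :=
      sInf_le ⟨i, rfl, fun h2 => h0 ((extM_subsingleton _ _ _).1 h2)⟩
    have h2 : ((i + 1 : ℕ) : ℕ∞) ≤ rdepth A := by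
      refine le_sInf ?_
      rintro _ ⟨l, rfl, hl⟩
      by_contra hlt
      have : l ≤ i := by
        have : l < i + 1 := by exact_mod_cast not_le.1 hlt
        omega
      exact hl ((extM_subsingleton _ _ _).2 (hj l this))
    have h3 : ((i + 1 : ℕ) : ℕ∞) ≤ k := by exact_mod_cast hi
    have h4 := (le_min h3 h2).trans (h.trans h1)
    have : i + 1 ≤ i := by exact_mod_cast h4
    omega
  · intro h
    refine le_sInf ?_
    rintro _ ⟨i, rfl, hi⟩
    by_contra hlt
    rw [not_le, lt_min_iff] at hlt
    apply hi
    rw [extM_subsingleton]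
    refine h i (by exact_mod_cast hlt.1) fun j hj => ?_
    by_contra h0
    have h1 : rdepth A ≤ j := sInf_le ⟨j, rfl, fun h2 => h0 ((extM_subsingleton _ _ _).1 h2)⟩
    have h2 : (i : ℕ∞) < j := hlt.2.trans_le h1
    have : i < j := by exact_mod_cast h2
    omega

lemma stilde_iff {R : Type u} [CommRing R] {M : Type u} [AddCommGroup M] [Module R M] (k : ℕ) :
    Stilde R k M ↔ ∀ (p : Ideal R) (_ : p.IsPrime), ∀ i < k,
      (∀ j ≤ i, Subsingleton (EX (Localization p.primeCompl) j (Localization p.primeCompl ⧸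
        IsLocalRing.maximalIdeal (Localization.AtPrime p)) (Localization p.primeCompl))) →
      Subsingleton (EX (Localization p.primeCompl) i (Localization p.primeCompl ⧸
        IsLocalRing.maximalIdeal (Localization.AtPrime p)) (LocalizedModule p.primeCompl M)) :=
  forall_congr' fun p => forall_congr' fun _ => stilde_loc (A := Localization.AtPrime p)
    (M := LocalizedModule p.primeCompl M) k

/-- (ii) in grade zero -/
lemma part_ii_zero {R : Type u} [CommRing R] [IsNoetherianRing R] {K M M₁ M₂ : Type u}
    [AddCommGroup K] [Module R K]
    [AddCommGroup M] [Module R M] [Module.Finite R M] [AddCommGroup M₁] [Module R M₁]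
    [Module.Finite R M₁] [AddCommGroup M₂] [Module R M₂]
    {c c₂ : Ideal R} {η : EX R 0 (R ⧸ c) K} {η₂ : EX R 0 (R ⧸ c₂) K} (hK : IsSemidualizing R K)
    (h : GorD K c 0 η)
    (h₂ : GorD K c₂ 0 η₂) (D₁ : LinkD c M₁ M) (D₁' : LinkD c M M₁) (D₂ : LinkD c₂ M M₂)
    (m : ℕ) (hm : GLE (A := R) K m M₁) (k : ℕ) (hS : Stilde R k M₁) : Stilde R k M₂ := by
  have := hK.1
  rw [stilde_iff] at hS ⊢
  intro p hp
  obtain ⟨q, hq⟩ := link_ses_zero h D₁'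
  obtain ⟨q₂, hq₂⟩ := link_ses_zero h₂ D₂
  have l1 := gk_loc p.primeCompl (gk_dual (link_P0 hK h D₁'))
  have l2 := gk_loc p.primeCompl (gk_dual (link_P0 hK h₂ D₂))
  exact local_step (A := Localization.AtPrime p) (sd_loc p.primeCompl hK) (ses_loc p.primeCompl hq)
    (ses_loc p.primeCompl hq₂) l1 l2 (gl_loc p.primeCompl m hm)
    (fun h1 => link_loc p.primeCompl hK h₂ D₂ (link_loc p.primeCompl hK h D₁ h1)) k (hS p hp)

end LK10

section LK11

variable {R : Type u} [CommRing R] 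

lemma stilde_sub {X : Type u} [AddCommGroup X] [Module R X] [Subsingleton X] (k : ℕ) :
    Stilde R k X := by
  rw [stilde_iff]
  intro p hp i _ _
  have : Subsingleton (LocalizedModule p.primeCompl X) := by
    refine subsingleton_of_forall_eq 0 fun y => ?_
    induction y with
    | h m s => rw [Subsingleton.elim m 0, LocalizedModule.zero_mk]
  exact ex_sub_right i

lemma stilde_zero {X : Type u} [AddCommGroup X] [Module R X] : Stilde R 0 X := by
  rw [stilde_iff]
  intro p hp i hi
  exact absurd hi (Nat.not_lt_zero i)

lemma exists_ass [IsNoetherianRing R] {X : Type u} [AddCommGroup X] [Module R X] [Nontrivial X] :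
    ∃ (p : Ideal R) (_ : p.IsPrime) (x : X), ∀ r, r ∈ p ↔ r • x = 0 := by
  obtain ⟨p, hp⟩ := associatedPrimes.nonempty R X
  obtain ⟨h, x, hx⟩ := (isAssociatedPrime_iff_exists_injective_linearMap _ _).1 hp
  refine ⟨p, h, x (Submodule.Quotient.mk 1), fun r => ?_⟩
  rw [← map_smul, map_eq_zero_iff _ hx, ← Submodule.Quotient.mk_smul, Submodule.Quotient.mk_eq_zero]
  simp

lemma pos_grade [IsNoetherianRing R] {X : Type u} [AddCommGroup X] [Module R X] {c : Ideal R}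
    (h0 : Subsingleton (EX R 0 (R ⧸ c) R)) (hX : c ≤ Module.annihilator R X) (k : ℕ)
    (hS : Stilde R (k+1) X) : Subsingleton X := by
  by_contra hne
  rw [not_subsingleton_iff_nontrivial] at hne
  have h1 : Subsingleton (R ⧸ c →ₗ[R] R) := (exHom (R ⧸ c) R).symm.injective.subsingleton
  obtain ⟨t, ht, hreg⟩ := IsSMulRegular.subsingleton_linearMap_iff.1 h1
  rw [Ideal.annihilator_quotient] at ht
  obtain ⟨p, hp, x, hx⟩ := exists_ass (R := R) (X := X)
  have htp : t ∈ p := (hx t).2 (Module.mem_annihilator.1 (hX ht) x)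
  rw [stilde_iff] at hS
  have key := hS p hp 0 (Nat.succ_pos k) (by
    intro j hj
    obtain rfl : j = 0 := by omega
    have : Subsingleton ((Localization p.primeCompl ⧸
        IsLocalRing.maximalIdeal (Localization.AtPrime p)) →ₗ[Localization p.primeCompl]
          Localization p.primeCompl) := by
      refine IsSMulRegular.linearMap_subsingleton_of_mem_annihilator
        (r := algebraMap R (Localization p.primeCompl) t) ?_ ?_
      · rw [isSMulRegular_iff_right_eq_zero_of_smul]
        intro a ha
        obtain ⟨r, s, rfl⟩ := IsLocalization.exists_mk'_eq p.primeCompl a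
        rw [smul_eq_mul, IsLocalization.mul_mk'_eq_mk'_of_mul, IsLocalization.mk'_eq_zero_iff] at ha
        obtain ⟨w, hw⟩ := ha
        rw [IsLocalization.mk'_eq_zero_iff]
        refine ⟨w, hreg.right_eq_zero_of_smul ?_⟩
        rw [smul_eq_mul, ← hw]
        ring
      · rw [Ideal.annihilator_quotient]
        exact (IsLocalization.AtPrime.to_map_mem_maximal_iff (Localization.AtPrime p) p t).2 htp
    exact (exHom _ _).injective.subsingleton)
  have key2 := (exHom (A := Localization p.primeCompl) (Localization p.primeCompl ⧸
        IsLocalRing.maximalIdeal (Localization.AtPrime p)) (LocalizedModule p.primeCompl X)).symm.injective.subsingleton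
  let ψ : (Localization p.primeCompl ⧸ IsLocalRing.maximalIdeal (Localization.AtPrime p))
      →ₗ[Localization p.primeCompl] LocalizedModule p.primeCompl X :=
    Submodule.liftQ _ (LinearMap.toSpanSingleton (Localization p.primeCompl) _
      (LocalizedModule.mk x 1)) fun a ha => by
      rw [← Localization.AtPrime.map_eq_maximalIdeal] at ha
      refine (Ideal.map_le_iff_le_comap.2 ?_ : Ideal.map (algebraMap R (Localization p.primeCompl)) p ≤ _) ha
      intro r hr
      change LinearMap.toSpanSingleton (Localization p.primeCompl) _ _ _ = 0
      rw [LinearMap.toSpanSingleton_apply, algebraMap_smul, LocalizedModule.smul'_mk, (hx r).1 hr,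
        LocalizedModule.zero_mk]
  have h3 : ψ (Submodule.Quotient.mk 1) = LocalizedModule.mk x 1 := by
    change (LinearMap.toSpanSingleton (Localization p.primeCompl) (LocalizedModule p.primeCompl X)
      (LocalizedModule.mk x 1)) 1 = _
    rw [LinearMap.toSpanSingleton_apply, one_smul]
  rw [Subsingleton.elim ψ 0, LinearMap.zero_apply, eq_comm] at h3
  obtain ⟨s, hs⟩ := (IsLocalizedModule.eq_zero_iff p.primeCompl
    (LocalizedModule.mkLinearMap p.primeCompl X)).1 h3
  exact s.2 ((hx s).2 hs)

lemma gkdim_eq {K M₁ M₂ : Type u} [AddCommGroup K] [Module R K] [AddCommGroup M₁] [Module R M₁]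
    [AddCommGroup M₂] [Module R M₂]
    (h : ∀ m, GLE (A := R) K m M₁ ↔ GLE (A := R) K m M₂) : GKDim R K M₁ = GKDim R K M₂ := by
  unfold GKDim
  congr 1
  ext n
  exact exists_congr fun k => and_congr_right fun _ => h k

lemma gkdim_fin {K M₁ : Type u} [AddCommGroup K] [Module R K] [AddCommGroup M₁] [Module R M₁]
    (h : GKDim R K M₁ < ⊤) : ∃ m, GLE (A := R) K m M₁ := by
  by_contra! h0
  refine h.ne (sInf_eq_top.2 ?_)
  rintro _ ⟨k, rfl, hk⟩
  exact absurd hk (h0 k)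

lemma main19 [IsNoetherianRing R] [IsLocalRing R] (K : Type u) [AddCommGroup K] [Module R K]
    (hK : IsSemidualizing R K)
    (c₁ c₂ : Ideal R) (hc₁ : IsGKGorensteinIdeal R K c₁) (hc₂ : IsGKGorensteinIdeal R K c₂)
    (M₁ M M₂ : Type u) [AddCommGroup M₁] [Module R M₁] [Module.Finite R M₁]
    [AddCommGroup M] [Module R M] [Module.Finite R M]
    [AddCommGroup M₂] [Module R M₂] [Module.Finite R M₂]
    (l₁ : LinkedBy R c₁ M₁ M) (l₂ : LinkedBy R c₂ M M₂) :
    GKDim R K M₁ = GKDim R K M₂ ∧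
    (GKDim R K M₁ < ⊤ → ∀ k : ℕ, (Stilde R k M₁ ↔ Stilde R k M₂)) := by
  obtain ⟨n₁, η₁, g₁⟩ := gor_of hK hc₁
  obtain ⟨n₂, η₂, g₂⟩ := gor_of hK hc₂
  obtain ⟨⟨D₁⟩, ⟨D₁'⟩⟩ := linkD_of_linked g₁.ne l₁
  obtain ⟨⟨D₂⟩, ⟨D₂'⟩⟩ := linkD_of_linked g₂.ne l₂
  by_cases hz : Subsingleton M₁
  · have h2 := link_zero D₂ (link_zero D₁ hz)
    exact ⟨gkdim_eq fun m => iff_of_true (gl_of_gk gk_sub) (gl_of_gk gk_sub),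
      fun _ k => iff_of_true (stilde_sub k) (stilde_sub k)⟩
  have hM : ¬ Subsingleton M := fun h => hz (link_zero D₁' h)
  have hz₂ : ¬ Subsingleton M₂ := fun h => hM (link_zero D₂' h)
  obtain ⟨f₁, hf₁⟩ := link_ne D₁ hM
  obtain ⟨f₂, hf₂⟩ := link_ne D₂' hM
  obtain rfl : n₁ = n₂ := le_antisymm (gor_le g₂ g₁ (link_ann D₁') f₂ hf₂)
    (gor_le g₁ g₂ (link_ann D₂) f₁ hf₁)
  have hi : ∀ m, GLE (A := R) K m M₁ ↔ GLE (A := R) K m M₂ := fun m =>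
    ⟨part_i hK g₁ g₂ D₁ D₁' D₂ m, part_i hK g₂ g₁ D₂' D₂ D₁' m⟩
  refine ⟨gkdim_eq hi, fun hfin k => ?_⟩
  obtain ⟨m, hm⟩ := gkdim_fin hfin
  rcases Nat.eq_zero_or_pos n₁ with rfl | hn
  · exact ⟨part_ii_zero hK g₁ g₂ D₁ D₁' D₂ m hm k,
      part_ii_zero hK g₂ g₁ D₂' D₂ D₁' m ((hi m).1 hm) k⟩
  · cases k with
    | zero => exact iff_of_true stilde_zero stilde_zero
    | succ k =>
      exact iff_of_false (fun h => hz (pos_grade (g₁.vanR 0 hn) (link_ann D₁) k h))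
        (fun h => hz₂ (pos_grade (g₂.vanR 0 hn) (link_ann D₂') k h))

end LK11

section Statements

variable (R : Type u) [CommRing R] [IsNoetherianRing R]

theorem stmt19 [IsLocalRing R] (K : Type u) [AddCommGroup K] [Module R K]
    (hK : IsSemidualizing R K)
    (c₁ c₂ : Ideal R) (hc₁ : IsGKGorensteinIdeal R K c₁) (hc₂ : IsGKGorensteinIdeal R K c₂)
    (M₁ M M₂ : Type u) [AddCommGroup M₁] [Module R M₁] [Module.Finite R M₁]
    [AddCommGroup M] [Module R M] [Module.Finite R M]
    [AddCommGroup M₂] [Module R M₂] [Module.Finite R M₂]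
    (l₁ : LinkedBy R c₁ M₁ M) (l₂ : LinkedBy R c₂ M M₂) :
    GKDim R K M₁ = GKDim R K M₂ ∧
    (GKDim R K M₁ < ⊤ → ∀ k : ℕ, (Stilde R k M₁ ↔ Stilde R k M₂)) := by
  exact main19 K hK c₁ c₂ hc₁ hc₂ M₁ M M₂ l₁ l₂

end Statements
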